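/- arXiv:1609.06911 — 7 statements merged into one kernel-verified Lean document; each statement's English description precedes it below -/
import Mathlib

section
/- For every natural number N, there exists a pair of connected graphs G and H on the same number of vertices, with more than N vertices, such that G and H are D-cospectral, diam(G) ≠ diam(H), and W(G) ≠ W(H). In particular, there are infinitely many pairs of D-cospectral graphs that have different diameters and different Wiener indices. -/
open SimpleGraph

/-- The distance matrix of a graph `G`, with real entries: the `(u,v)` entry is the
distance between `u` and `v` in `G`. -/
noncomputable def distMatrix {V : Type*} [Fintype V] (G : SimpleGraph V) : Matrix V V ℝ :=
  fun u v => (G.dist u v : ℝ)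

/-- The Wiener index of a graph `G`: half the sum of the distances between all ordered
pairs of vertices, i.e. the sum of distances over all unordered pairs. -/
noncomputable def wienerIndex {V : Type*} [Fintype V] (G : SimpleGraph V) : ℚ :=
  (∑ u : V, ∑ v : V, (G.dist u v : ℚ)) / 2

namespace DCosp

/- Base pair on ten vertices: `dG` is the distance matrix of `C₄ ∨ K₃` with one pendant vertex
attached to each vertex of the `K₃`; `dH` is the distance matrix of `K₁ ∨ (C₈ ∪ K₁)`.
The infinite family arises by replacing every vertex by a clique on `m` vertices. -/
def dG : Fin 10 → Fin 10 → ℕ :=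
  !![0, 1, 2, 1, 1, 1, 1, 2, 2, 2;
    1, 0, 1, 2, 1, 1, 1, 2, 2, 2;
    2, 1, 0, 1, 1, 1, 1, 2, 2, 2;
    1, 2, 1, 0, 1, 1, 1, 2, 2, 2;
    1, 1, 1, 1, 0, 1, 1, 1, 2, 2;
    1, 1, 1, 1, 1, 0, 1, 2, 1, 2;
    1, 1, 1, 1, 1, 1, 0, 2, 2, 1;
    2, 2, 2, 2, 1, 2, 2, 0, 3, 3;
    2, 2, 2, 2, 2, 1, 2, 3, 0, 3;
    2, 2, 2, 2, 2, 2, 1, 3, 3, 0]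

def dH : Fin 10 → Fin 10 → ℕ :=
  !![0, 1, 2, 2, 2, 2, 2, 1, 1, 2;
    1, 0, 1, 2, 2, 2, 2, 2, 1, 2;
    2, 1, 0, 1, 2, 2, 2, 2, 1, 2;
    2, 2, 1, 0, 1, 2, 2, 2, 1, 2;
    2, 2, 2, 1, 0, 1, 2, 2, 1, 2;
    2, 2, 2, 2, 1, 0, 1, 2, 1, 2;
    2, 2, 2, 2, 2, 1, 0, 1, 1, 2;
    1, 2, 2, 2, 2, 2, 1, 0, 1, 2;
    1, 1, 1, 1, 1, 1, 1, 1, 0, 1;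
    2, 2, 2, 2, 2, 2, 2, 2, 1, 0]

def SS : Matrix (Fin 10) (Fin 10) ℤ :=
  !![0, 1, -1, -3, 0, 1, -1, -1, -1, -1;
    -1, 0, -1, -1, 1, -1, 0, 0, -1, -2;
    -1, -3, 0, 1, 0, 0, 0, 1, -2, -2;
    -1, -1, -1, 0, 1, 0, -1, 0, -2, -1;
    0, 1, -1, -3, 0, -1, 1, -1, -1, -1;
    -1, 0, -1, -1, -1, 1, 0, -2, -1, 0;
    -1, -3, 0, 1, 0, 0, 0, -3, 0, 0;
    -1, -1, -1, 0, -1, 0, 1, -2, 0, -1;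
    4, 4, 4, 4, -8, -8, -8, 0, 0, 0;
    -2, -2, -2, -2, 0, 0, 0, 0, 0, 0]

def TT : Matrix (Fin 10) (Fin 10) ℤ :=
  !![9, -27, -3, 21, 9, -27, -3, 21, 0, -3;
    -3, 9, -3, -3, -3, 9, -3, -3, 0, -3;
    -3, 21, 9, -27, -3, 21, 9, -27, 0, -3;
    -3, -3, -3, 9, -3, -3, -3, 9, 0, -3;
    0, 4, -4, 4, 0, -4, 4, -4, -1, -2;
    6, -2, 2, -2, -6, 2, -2, 2, -1, -2;
    -6, -2, 2, -2, 6, 2, -2, 2, -1, -2;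
    -1, -1, 3, -1, -1, -1, -5, -1, 0, 3;
    5, 5, -3, -7, -7, -7, 1, 5, 0, 3;
    -7, -7, -3, 5, 5, 5, 1, -7, 0, 3]

/-- Abstract properties characterising a distance function of a connected graph. -/
structure IsD {V : Type*} (d : V → V → ℕ) : Prop where
  zero : ∀ i j, d i j = 0 ↔ i = j
  symm : ∀ i j, d i j = d j i
  tri : ∀ i j k, d i j = 1 → d i k ≤ d j k + 1
  step : ∀ i k, i ≠ k → ∃ j, d i j = 1 ∧ d i k = d j k + 1

/-- The graph whose edges are the pairs at distance one. -/
def gr {V : Type*} (d : V → V → ℕ) (h : IsD d) : SimpleGraph V where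
  Adj a b := d a b = 1
  symm := ⟨fun a b hab => by rw [h.symm]; exact hab⟩
  loopless := ⟨fun a ha => by
    have := (h.zero a a).2 rfl
    omega⟩

lemma exists_walk {V : Type*} (d : V → V → ℕ) (h : IsD d) (n : ℕ) :
    ∀ a b, d a b = n → ∃ p : (gr d h).Walk a b, p.length = n := by
  induction n with
  | zero =>
    intro a b hab
    obtain rfl := (h.zero a b).1 hab
    exact ⟨SimpleGraph.Walk.nil, rfl⟩
  | succ n ih =>
    intro a b hab
    have hne : a ≠ b := fun hh => by
      have := (h.zero a b).2 hh
      omega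
    obtain ⟨j, hj, hj2⟩ := h.step a b hne
    obtain ⟨p, hp⟩ := ih j b (by omega)
    exact ⟨SimpleGraph.Walk.cons (show (gr d h).Adj a j from hj) p, by simp [hp]⟩

lemma le_walk {V : Type*} (d : V → V → ℕ) (h : IsD d) {a b : V} (p : (gr d h).Walk a b) :
    d a b ≤ p.length := by
  induction p with
  | nil => simp [(h.zero _ _).2 rfl]
  | cons hadj p ih =>
    have h2 := fun k => h.tri _ _ k (show d _ _ = 1 from hadj)
    rw [SimpleGraph.Walk.length_cons]
    exact (h2 _).trans (by omega)

lemma conn {V : Type*} [Nonempty V] (d : V → V → ℕ) (h : IsD d) : (gr d h).Connected := by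
  refine ⟨fun a b => ?_⟩
  obtain ⟨p, -⟩ := exists_walk d h _ a b rfl
  exact ⟨p⟩

lemma dist_gr {V : Type*} [Nonempty V] (d : V → V → ℕ) (h : IsD d) (a b : V) :
    (gr d h).dist a b = d a b := by
  apply le_antisymm
  · obtain ⟨p, hp⟩ := exists_walk d h _ a b rfl
    rw [← hp]
    exact SimpleGraph.dist_le p
  · obtain ⟨p, hp⟩ := (conn d h).exists_walk_length_eq_dist a b
    rw [← hp]
    exact le_walk d h p

/-- Clique blow-up of a distance function along `f`. -/
def bl {V W : Type*} [DecidableEq V] [DecidableEq W] (f : V → W) (d : W → W → ℕ) :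
    V → V → ℕ :=
  fun a b => d (f a) (f b) + if f a = f b ∧ a ≠ b then 1 else 0

lemma isD_bl {V W : Type*} [DecidableEq V] [DecidableEq W] (f : V → W)
    (hf : Function.Surjective f) (d : W → W → ℕ) (h : IsD d) : IsD (bl f d) where
  zero a b := by
    have := h.zero (f a) (f b)
    unfold bl
    by_cases hab : a = b
    · subst hab; simp [this]
    · by_cases hf : f a = f b <;> simp [hab, hf, this]
  symm a b := by
    unfold bl
    rw [h.symm]
    simp only [ne_eq, eq_comm]
  tri a b c hab := by
    have h0 := h.zero (f a) (f b)
    have h1 := h.zero (f a) (f c)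
    have h2 := h.zero (f b) (f c)
    have h3 := h.tri (f a) (f b) (f c)
    unfold bl at *
    by_cases e1 : f a = f b
    · rw [e1]
      split_ifs <;> omega
    · have h4 : d (f a) (f b) = 1 := by simpa [e1] using hab
      have h5 := h3 h4
      by_cases e2 : f a = f c
      · have := h1.2 e2
        split_ifs <;> omega
      · simp only [e2, false_and, if_false]
        omega
  step a c hac := by
    by_cases e : f a = f c
    · refine ⟨c, ?_, ?_⟩
      · simp [bl, e, hac, (h.zero (f c) (f c)).2 rfl]
      · simp [bl, e, hac, (h.zero (f c) (f c)).2 rfl]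
    · obtain ⟨j, hj, hj2⟩ := h.step _ _ e
      have hne : f a ≠ j := fun hh => by
        have := (h.zero (f a) j).2 hh
        omega
      by_cases e3 : j = f c
      · subst e3
        exact ⟨c, by simp [bl, e, hj], by simp [bl, e, hj2]⟩
      · obtain ⟨b, rfl⟩ := hf j
        exact ⟨b, by simp [bl, hne, hj], by simp [bl, e, e3, hj2]⟩

lemma isD_G : IsD dG where
  zero := by decide +kernel
  symm := by decide +kernel
  tri := by decide +kernel
  step := by decide +kernel

lemma isD_H : IsD dH where
  zero := by decide +kernel
  symm := by decide +kernel
  tri := by decide +kernel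
  step := by decide +kernel

lemma inter : SS * (Matrix.of dG).map (fun x : ℕ => (x : ℤ)) = (Matrix.of dH).map (fun x : ℕ => (x : ℤ)) * SS := by
  decide +kernel

lemma invS : TT * SS = (24 : ℤ) • (1 : Matrix (Fin 10) (Fin 10) ℤ) := by
  decide +kernel

lemma charpoly_eq {n : Type*} [Fintype n] [DecidableEq n] (A B S T : Matrix n n ℝ)
    (h : S * A = B * S) (hT : T * S = 1) : A.charpoly = B.charpoly := by
  have hT' : S * T = 1 := mul_eq_one_comm.1 hT
  let U : (Matrix n n ℝ)ˣ := ⟨S, T, hT', hT⟩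
  have hB : B = U.val * A * U⁻¹.val := by
    change B = S * A * T
    rw [h, mul_assoc, hT', mul_one]
  rw [hB, Matrix.coe_units_inv, Matrix.charpoly_units_conj]

open scoped Kronecker

/-- The projection from `Fin (10 * m)` onto the base vertex set. -/
def pr (m : ℕ) (x : Fin (10 * m)) : Fin 10 := (finProdFinEquiv.symm x).1

lemma pr_surj (m : ℕ) (hm : 0 < m) : Function.Surjective (pr m) := fun i =>
  ⟨finProdFinEquiv (i, ⟨0, hm⟩), by simp [pr]⟩

/-- The blow-up matrix. -/
noncomputable def KM (m : ℕ) (D : Matrix (Fin 10) (Fin 10) ℝ) :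
    Matrix (Fin 10 × Fin m) (Fin 10 × Fin m) ℝ :=
  (D + 1) ⊗ₖ (Matrix.of fun _ _ => 1) - 1

lemma matrix_bl (m : ℕ) [Nonempty (Fin (10 * m))] (d : Fin 10 → Fin 10 → ℕ)
    (h : IsD (bl (pr m) d)) :
    distMatrix (gr _ h) =
      Matrix.reindex finProdFinEquiv finProdFinEquiv
        (KM m ((Matrix.of d).map (fun x : ℕ => (x : ℝ)))) := by
  ext x y
  obtain ⟨⟨i, a⟩, rfl⟩ := finProdFinEquiv.surjective x
  obtain ⟨⟨j, b⟩, rfl⟩ := finProdFinEquiv.surjective y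
  simp only [distMatrix, dist_gr, bl, pr, KM, Matrix.reindex_apply, Matrix.submatrix_apply,
    Equiv.symm_apply_apply, Matrix.sub_apply, Matrix.kroneckerMap_apply, Matrix.of_apply,
    Matrix.add_apply, Matrix.map_apply, Matrix.one_apply, Prod.mk.injEq, ne_eq,
    EmbeddingLike.apply_eq_iff_eq]
  by_cases e : i = j <;> by_cases e' : a = b <;> simp [e, e']

lemma charpoly_KM (m : ℕ) :
    (KM m ((Matrix.of dG).map (fun x : ℕ => (x : ℝ)))).charpoly =
      (KM m ((Matrix.of dH).map (fun x : ℕ => (x : ℝ)))).charpoly := by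
  have h1 : SS.map (fun x : ℤ => (x : ℝ)) * (Matrix.of dG).map (fun x : ℕ => (x : ℝ)) =
      (Matrix.of dH).map (fun x : ℕ => (x : ℝ)) * SS.map (fun x : ℤ => (x : ℝ)) := by
    have := congrArg (fun M => M.map (Int.castRingHom ℝ)) inter
    simp only [Matrix.map_mul, Matrix.map_map] at this
    convert this using 2 <;> ext <;> simp
  have h2 : ((24 : ℝ)⁻¹ • TT.map (fun x : ℤ => (x : ℝ))) * SS.map (fun x : ℤ => (x : ℝ)) = 1 := by
    have := congrArg (fun M => M.map (Int.castRingHom ℝ)) invS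
    simp only [Matrix.map_mul] at this
    have h3 : TT.map (fun x : ℤ => (x : ℝ)) * SS.map (fun x : ℤ => (x : ℝ)) =
        (24 : ℝ) • (1 : Matrix (Fin 10) (Fin 10) ℝ) := by
      refine Eq.trans this ?_
      ext i j
      simp only [Matrix.map_apply, Matrix.smul_apply, Matrix.one_apply]
      split_ifs <;> simp
    rw [Matrix.smul_mul, h3, smul_smul]
    norm_num
  refine charpoly_eq _ _ (SS.map (fun x : ℤ => (x : ℝ)) ⊗ₖ (1 : Matrix (Fin m) (Fin m) ℝ))
    (((24 : ℝ)⁻¹ • TT.map (fun x : ℤ => (x : ℝ))) ⊗ₖ (1 : Matrix (Fin m) (Fin m) ℝ)) ?_ ?_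
  · unfold KM
    rw [mul_sub, sub_mul, ← Matrix.mul_kronecker_mul, ← Matrix.mul_kronecker_mul,
      mul_add, add_mul, h1]
    simp
  · rw [← Matrix.mul_kronecker_mul, h2]
    simp

lemma sum_pr (m : ℕ) (g : Fin 10 → Fin 10 → ℚ) :
    ∑ x : Fin (10 * m), ∑ y : Fin (10 * m), g (pr m x) (pr m y) =
      (m : ℚ) ^ 2 * ∑ i, ∑ j, g i j := by
  have key : ∀ k : Fin 10 → ℚ, ∑ x : Fin (10 * m), k (pr m x) = (m : ℚ) * ∑ i, k i := by
    intro k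
    rw [← finProdFinEquiv.sum_comp, Fintype.sum_prod_type]
    simp [pr, Finset.mul_sum]
  simp only [key]
  rw [← Finset.mul_sum, key (fun i => ∑ j, g i j)]
  ring

lemma sum_G : ∑ i, ∑ j, dG i j = 142 := by decide +kernel
lemma sum_H : ∑ i, ∑ j, dH i j = 146 := by decide +kernel
lemma le_H : ∀ i j, dH i j ≤ 2 := by decide +kernel

end DCosp

open DCosp in
theorem exists_D_cospectral_diff_diam_diff_wiener (N : ℕ) :
    ∃ (n : ℕ), N < n ∧ ∃ (G H : SimpleGraph (Fin n)),
      G.Connected ∧ H.Connected ∧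
      (distMatrix G).charpoly = (distMatrix H).charpoly ∧
      G.diam ≠ H.diam ∧
      wienerIndex G ≠ wienerIndex H := by
  have hm : 0 < N + 1 := N.succ_pos
  have hs := pr_surj (N + 1) hm
  have : Nonempty (Fin (10 * (N + 1))) := ⟨⟨0, by omega⟩⟩
  have hG := isD_bl _ hs _ isD_G
  have hH := isD_bl _ hs _ isD_H
  refine ⟨10 * (N + 1), by omega, gr _ hG, gr _ hH, conn _ hG, conn _ hH, ?_, ?_, ?_⟩
  · rw [matrix_bl _ _ hG, matrix_bl _ _ hH, Matrix.charpoly_reindex, Matrix.charpoly_reindex,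
      charpoly_KM]
  · obtain ⟨u, v, huv⟩ := (gr _ hH).exists_dist_eq_diam
    have h1 : (gr _ hH).diam ≤ 2 := by
      rw [← huv, dist_gr]
      have := le_H (pr (N + 1) u) (pr (N + 1) v)
      unfold bl
      split_ifs with hc
      · have := (isD_H.zero _ _).2 hc.1
        omega
      · omega
    obtain ⟨a, ha⟩ := hs 7
    obtain ⟨b, hb⟩ := hs 8
    have h2 : (gr _ hG).dist a b ≤ (gr _ hG).diam :=
      SimpleGraph.dist_le_diam (SimpleGraph.connected_iff_ediam_ne_top.1 (conn _ hG))
    rw [dist_gr] at h2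
    have h3 : 3 ≤ bl (pr (N + 1)) dG a b := by
      unfold bl
      rw [ha, hb]
      have : dG 7 8 = 3 := by decide +kernel
      omega
    omega
  · intro hW
    unfold wienerIndex at hW
    simp only [dist_gr, bl, Nat.cast_add, Finset.sum_add_distrib] at hW
    rw [sum_pr (N + 1) (fun i j => (dG i j : ℚ)), sum_pr (N + 1) (fun i j => (dH i j : ℚ))] at hW
    have h1 : ∑ i, ∑ j, (dG i j : ℚ) = 142 := by exact_mod_cast sum_G
    have h2 : ∑ i, ∑ j, (dH i j : ℚ) = 146 := by exact_mod_cast sum_H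
    rw [h1, h2] at hW
    have : (0 : ℚ) < ((N + 1 : ℕ) : ℚ) ^ 2 := by positivity
    linarith
end

section
/- If G is a connected transmission-regular graph on n > 2 vertices, then G has no cut vertex; that is, for every vertex v of G, the graph G − v obtained by deleting v remains connected. -/
open SimpleGraph Finset

/-- The transmission index of a vertex `v` of a graph `G`: the sum of the distances from
`v` to all vertices of `G`. -/
noncomputable def transmission {V : Type*} [Fintype V] (G : SimpleGraph V) (v : V) : ℕ :=
  ∑ u : V, G.dist v u

theorem aux_dist {V : Type*} (G : SimpleGraph V) (v : V) (A : Set V)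
    (hA : ∀ x ∈ A, ∀ y, G.Adj x y → y ∉ A → y = v) {u b : V} (p : G.Walk u b) :
    u ∈ A → b ∉ A → G.dist v b + 1 ≤ p.length ∧ ∃ w ∈ A, G.Adj w v := by
  induction p with
  | nil => intro h h'; exact absurd h h'
  | @cons x y z h p ih =>
    intro hx hz
    by_cases hy : y ∈ A
    · obtain ⟨h1, h2⟩ := ih hy hz
      refine ⟨?_, h2⟩
      rw [Walk.length_cons]; omega
    · have := hA x hx y h hy
      subst this
      refine ⟨?_, x, hx, h⟩
      rw [Walk.length_cons]
      have := SimpleGraph.dist_le p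
      omega

theorem aux_card {V : Type*} [Fintype V] (G : SimpleGraph V)
    (hG : G.Connected) (htr : ∀ u v : V, transmission G u = transmission G v)
    (v : V) (A : Set V) [DecidablePred fun x => x ∈ A]
    [DecidablePred fun x => x ∉ A] (hv : v ∉ A) (hne : A.Nonempty)
    (hA : ∀ x ∈ A, ∀ y, G.Adj x y → y ∉ A → y = v) :
    #{x : V | x ∉ A} ≤ #{x : V | x ∈ A} := by
  obtain ⟨a, ha⟩ := hne
  obtain ⟨p⟩ := hG.preconnected a v
  obtain ⟨-, u, hu, huv⟩ := aux_dist G v A hA p ha hv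
  have key : ∀ x : V, G.dist v x + (if x ∉ A then 1 else 0)
      ≤ G.dist u x + (if x ∈ A then 1 else 0) := by
    intro x
    by_cases hx : x ∈ A
    · have h1 := hG.dist_triangle (u := v) (v := u) (w := x)
      have h2 : G.dist v u = 1 := SimpleGraph.dist_eq_one_iff_adj.2 huv.symm
      simp only [hx, not_true, if_true, if_false]
      omega
    · obtain ⟨q, hq⟩ := hG.exists_walk_length_eq_dist u x
      have := (aux_dist G v A hA q hu hx).1
      simp only [hx, not_false_eq_true, if_true, if_false]
      omega
  have hs := Finset.sum_le_sum (s := Finset.univ) (fun x _ => key x)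
  rw [Finset.sum_add_distrib, Finset.sum_add_distrib, ← Finset.card_filter,
    ← Finset.card_filter] at hs
  have := htr u v
  unfold transmission at this
  omega

/-- A connected transmission-regular graph on more than two vertices has no cut vertex:
deleting any vertex leaves a connected graph. -/
theorem transmissionRegular_no_cutVertex {V : Type*} [Fintype V] (G : SimpleGraph V)
    (hG : G.Connected) (hn : 2 < Fintype.card V)
    (htr : ∀ u v : V, transmission G u = transmission G v) :
    ∀ v : V, (G.induce ({v}ᶜ : Set V)).Connected := by
  classical
  intro v
  obtain ⟨w, hw⟩ := Fintype.exists_ne_of_one_lt_card (by omega : 1 < Fintype.card V) v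
  have : Nonempty ({v}ᶜ : Set V) := ⟨⟨w, hw⟩⟩
  refine SimpleGraph.Connected.mk ?_
  intro x y
  by_contra hxy
  let A : Set V := {z | ∃ h : z ∈ ({v}ᶜ : Set V), (G.induce ({v}ᶜ : Set V)).Reachable x ⟨z, h⟩}
  let B : Set V := {z | z ≠ v ∧ z ∉ A}
  have hvA : v ∉ A := fun ⟨h, _⟩ => h rfl
  have hcl : ∀ a ∈ A, ∀ b, G.Adj a b → b ≠ v → b ∈ A := by
    rintro a ⟨h, hr⟩ b hab hb
    refine ⟨hb, hr.trans (SimpleGraph.Adj.reachable ?_)⟩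
    exact hab
  have h1 := aux_card G hG htr v A hvA ⟨x, x.2, Reachable.refl _⟩ (by
    intro a ha b hab hb
    by_contra hbv
    exact hb (hcl a ha b hab hbv))
  have h2 := aux_card G hG htr v B (fun h => h.1 rfl) ⟨y, y.2, fun ⟨_, h⟩ => hxy h⟩ (by
    rintro a ⟨ha, ha'⟩ b hab hb
    by_contra hbv
    have hbA : b ∈ A := by
      by_contra hbA
      exact hb ⟨hbv, hbA⟩
    exact ha' (hcl b hbA a hab.symm ha))
  have h3 : #{z : V | z ∈ B} < #{z : V | z ∉ A} := by
    apply Finset.card_lt_card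
    refine Finset.ssubset_iff_of_subset ?_ |>.2 ⟨v, by simpa using hvA, ?_⟩
    · intro z hz
      simp only [Finset.mem_filter, Finset.mem_univ, true_and] at hz ⊢
      exact hz.2
    · simp only [Finset.mem_filter, Finset.mem_univ, true_and]
      exact fun h => h.1 rfl
  have h4 : #{z : V | z ∈ A} ≤ #{z : V | z ∉ B} := by
    apply Finset.card_le_card
    intro z hz
    simp only [Finset.mem_filter, Finset.mem_univ, true_and] at hz ⊢
    exact fun h => h.2 hz
  omega
end

section
/- If G is a connected k-transmission-regular graph on n vertices, then k ≤ ⌊n²/4⌋; moreover, for n > 2, equality k = ⌊n²/4⌋ holds if and only if G is the cycle graph C_n. -/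
open SimpleGraph Finset

section helpers

variable {V : Type*}

lemma tr_ivt {G : SimpleGraph V} (hG : G.Connected) (v : V) (i : ℕ) {a b : V} (p : G.Walk a b) :
    G.dist v a ≤ i → i ≤ G.dist v b → ∃ w ∈ p.support, G.dist v w = i := by
  induction p with
  | nil => intro h1 h2; exact ⟨_, by simp, le_antisymm h1 h2⟩
  | @cons x y z hadj q ih =>
    intro h1 h2
    by_cases h : G.dist v x = i
    · exact ⟨x, by simp, h⟩
    · have h3 : G.dist v y ≤ G.dist v x + G.dist x y := hG.dist_triangle
      rw [dist_eq_one_iff_adj.mpr hadj] at h3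
      obtain ⟨w, hw, hw'⟩ := ih (by omega) h2
      exact ⟨w, by simp [hw], hw'⟩

lemma tr_pred {G : SimpleGraph V} (hG : G.Connected) (v u : V) (i : ℕ)
    (h : G.dist v u = i + 1) : ∃ w, G.Adj w u ∧ G.dist v w = i := by
  obtain ⟨p, hp⟩ := hG.exists_walk_length_eq_dist u v
  cases p with
  | nil => simp at h
  | @cons _ y _ hadj q =>
    refine ⟨y, hadj.symm, ?_⟩
    have h1 := dist_le q
    have h3 : G.dist v u ≤ G.dist v y + G.dist y u := hG.dist_triangle
    rw [dist_eq_one_iff_adj.mpr hadj.symm] at h3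
    rw [dist_comm] at h1 h
    rw [Walk.length_cons] at hp
    rw [dist_comm] at h3
    omega

lemma tr_sep [Fintype V] {G : SimpleGraph V} (hG : G.Connected) (w b : V)
    (htr : transmission G w = transmission G b) (B : Finset V) (hb : b ∈ B) (hw : w ∉ B)
    (hsep : ∀ a ∉ B, G.dist a w + G.dist w b ≤ G.dist a b) :
    Fintype.card V ≤ 2 * #B := by
  classical
  have hpos : 0 < G.dist w b := hG.pos_dist_of_ne (by rintro rfl; exact hw hb)
  have key : ∑ u : V, ((G.dist w u : ℤ) + (if u ∈ B then -(G.dist w b : ℤ) else G.dist w b))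
      ≤ ∑ u : V, (G.dist b u : ℤ) := by
    apply Finset.sum_le_sum
    intro u _
    split_ifs with h
    · have : G.dist w u ≤ G.dist w b + G.dist b u := hG.dist_triangle
      omega
    · have := hsep u h
      rw [dist_comm (u := w) (v := u), dist_comm (u := b) (v := u)]
      omega
  rw [Finset.sum_add_distrib] at key
  have h1 : ∑ u : V, (G.dist w u : ℤ) = ∑ u : V, (G.dist b u : ℤ) := by
    unfold transmission at htr
    exact_mod_cast htr
  have h2 : ∑ u : V, (if u ∈ B then -(G.dist w b : ℤ) else G.dist w b)
      = (G.dist w b : ℤ) * (Fintype.card V - 2 * #B) := by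
    have : ∀ u : V, (if u ∈ B then -(G.dist w b : ℤ) else G.dist w b)
      = (G.dist w b : ℤ) - if u ∈ B then 2 * (G.dist w b : ℤ) else 0 := by
      intro u; split_ifs <;> ring
    simp_rw [this]
    rw [Finset.sum_sub_distrib, Finset.sum_ite_mem]
    simp
    ring
  rw [h1, h2] at key
  by_contra hcon
  push Not at hcon
  have : (0 : ℤ) < (G.dist w b : ℤ) * (Fintype.card V - 2 * #B) := by
    apply mul_pos
    · exact_mod_cast hpos
    · have : (2 * #B : ℤ) < Fintype.card V := by exact_mod_cast hcon
      linarith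
  linarith

lemma tr_level [Fintype V] {G : SimpleGraph V} (hG : G.Connected) (k : ℕ)
    (htr : ∀ v : V, transmission G v = k) (v u : V) (i : ℕ) (hi : 0 < i) (hu : i < G.dist v u) :
    2 ≤ #{x : V | G.dist v x = i} := by
  classical
  obtain ⟨p, -⟩ := hG.exists_walk_length_eq_dist v u
  obtain ⟨w, -, hw⟩ := tr_ivt hG v i p (by simp) hu.le
  by_contra hcon
  have huniq : ∀ x, G.dist v x = i → x = w := by
    have h1 : #{x : V | G.dist v x = i} ≤ 1 := by omega
    rw [Finset.card_le_one] at h1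
    intro x hx
    exact h1 x (by simpa using hx) w (by simpa using hw)
  have hsep : ∀ a b, G.dist v a ≤ i → i ≤ G.dist v b →
      G.dist a w + G.dist w b ≤ G.dist a b := by
    intro a b ha hb
    obtain ⟨q, hq⟩ := hG.exists_walk_length_eq_dist a b
    obtain ⟨x, hx, hx'⟩ := tr_ivt hG v i q ha hb
    obtain rfl := huniq x hx'
    have h1 := dist_le (q.takeUntil x hx)
    have h2 := dist_le (q.dropUntil x hx)
    have h3 := congrArg Walk.length (q.take_spec hx)
    rw [Walk.length_append] at h3
    omega
  have hB := tr_sep hG w u (by rw [htr, htr]) {x : V | i < G.dist v x} (by simpa using hu)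
    (by simp [hw]) (by
      intro a ha
      exact hsep a u (by simpa using ha) hu.le)
  have hA := tr_sep hG w v (by rw [htr, htr]) {x : V | G.dist v x < i} (by simpa using hi)
    (by simp [hw]) (by
      intro a ha
      have := hsep v a (by simp) (by simpa using ha)
      rw [dist_comm (u := a) (v := w), dist_comm (u := w) (v := v), dist_comm (u := a) (v := v)]
      omega)
  have hd : Disjoint ({x : V | i < G.dist v x} : Finset V) ({x : V | G.dist v x < i} : Finset V) := by
    rw [Finset.disjoint_filter]; intro x _ h1; omega
  have hlt : #(({x : V | i < G.dist v x} : Finset V) ∪ ({x : V | G.dist v x < i} : Finset V))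
      < Fintype.card V := by
    apply Finset.card_lt_univ_of_notMem (x := w)
    simp [hw]
  rw [Finset.card_union_of_disjoint hd] at hlt
  omega

lemma tr_sum_bound (n : ℕ) : ∀ N ≥ n, ∑ j ∈ range N, (n - 1 - 2 * j) = n ^ 2 / 4 := by
  induction n using Nat.twoStepInduction with
  | zero => intro N _; simp
  | one => intro N _; simp
  | more n ih _ =>
    intro N hN
    obtain ⟨M, rfl⟩ : ∃ M, N = M + 1 := ⟨N - 1, by omega⟩
    rw [Finset.sum_range_succ']
    have : ∀ j, n + 2 - 1 - 2 * (j + 1) = n - 1 - 2 * j := by intro j; omega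
    simp_rw [this]
    rw [ih M (by omega)]
    have : (n + 2) ^ 2 = n ^ 2 + (n + 1) * 4 := by ring
    rw [this, Nat.add_mul_div_right _ _ (by norm_num)]
    omega

lemma tr_layer [Fintype V] (G : SimpleGraph V) (v : V) (N : ℕ) (hN : ∀ u, G.dist v u ≤ N) :
    transmission G v = ∑ j ∈ range N, #{u : V | j < G.dist v u} := by
  classical
  unfold transmission
  simp_rw [Finset.card_filter]
  rw [Finset.sum_comm]
  refine Finset.sum_congr rfl fun u _ => ?_
  rw [← Finset.card_filter]
  have : ({j ∈ range N | j < G.dist v u} : Finset ℕ) = range (G.dist v u) := by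
    ext j
    have := hN u
    simp only [mem_filter, mem_range]
    omega
  rw [this, card_range]

lemma tr_zero [Fintype V] {G : SimpleGraph V} (hG : G.Connected) (v : V) :
    #{u : V | 0 < G.dist v u} = Fintype.card V - 1 := by
  classical
  have : ({u : V | 0 < G.dist v u} : Finset V) = univ.erase v := by
    ext u
    simp only [mem_filter, mem_univ, true_and, mem_erase, and_true]
    rw [Nat.pos_iff_ne_zero, Ne, hG.dist_eq_zero_iff, eq_comm]
  rw [this, card_erase_of_mem (mem_univ _), card_univ]

lemma tr_step [Fintype V] (G : SimpleGraph V) (v : V) (j : ℕ) :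
    #{u : V | j < G.dist v u} = #{u : V | j + 1 < G.dist v u} + #{u : V | G.dist v u = j + 1} := by
  classical
  rw [← Finset.card_union_of_disjoint]
  · congr 1
    ext u
    simp only [mem_filter, mem_univ, true_and, mem_union]
    omega
  · rw [Finset.disjoint_filter]; intro x _ h1; omega

lemma tr_g_le [Fintype V] {G : SimpleGraph V} (hG : G.Connected) (k : ℕ)
    (htr : ∀ v : V, transmission G v = k) (v : V) (j : ℕ) :
    #{u : V | j < G.dist v u} ≤ Fintype.card V - 1 - 2 * j := by
  induction j with
  | zero => rw [tr_zero hG]; omega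
  | succ j ih =>
    rcases Finset.eq_empty_or_nonempty ({u : V | j + 1 < G.dist v u} : Finset V) with h | ⟨u, hu⟩
    · rw [h]; simp
    · have := tr_level hG k htr v u (j + 1) (by omega) (by simpa using hu)
      have := tr_step G v j
      omega

lemma tr_N [Fintype V] (G : SimpleGraph V) (v u : V) :
    G.dist v u ≤ Fintype.card V + transmission G v := by
  have : G.dist v u ≤ transmission G v :=
    Finset.single_le_sum (f := fun u => G.dist v u) (fun _ _ => Nat.zero_le _) (mem_univ u)
  omega

lemma tr_level_one [Fintype V] (G : SimpleGraph V) (v : V) :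
    #{u : V | G.dist v u = 1} = (G.neighborSet v).ncard := by
  classical
  rw [← Set.ncard_coe_finset]
  congr 1
  ext u
  simp [dist_eq_one_iff_adj]

lemma tr_level_anti [Fintype V] {G : SimpleGraph V} (hG : G.Connected)
    (h2 : ∀ v, (G.neighborSet v).ncard = 2) (v : V) (i : ℕ) :
    #{u : V | G.dist v u = i + 1} ≤ 2 := by
  classical
  induction i with
  | zero => rw [zero_add, tr_level_one, h2]
  | succ i ih =>
    refine le_trans ?_ ih
    have hp : ∀ u, ∃ w, G.dist v u = i + 1 + 1 → G.Adj w u ∧ G.dist v w = i + 1 := by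
      intro u
      by_cases h : G.dist v u = i + 1 + 1
      · obtain ⟨w, hw⟩ := tr_pred hG v u _ h
        exact ⟨w, fun _ => hw⟩
      · exact ⟨u, fun h' => absurd h' h⟩
    choose f hf using hp
    apply Finset.card_le_card_of_injOn f
    · intro u hu
      have hu' : G.dist v u = i + 1 + 1 := by simpa using hu
      simpa using (hf u hu').2
    · intro u hu u' hu' heq
      have hu : G.dist v u = i + 1 + 1 := by simpa using hu
      have hu' : G.dist v u' = i + 1 + 1 := by simpa using hu'
      by_contra hne
      obtain ⟨a1, a2⟩ := hf u hu
      obtain ⟨b1, b2⟩ := hf u' hu'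
      rw [← heq] at b1
      obtain ⟨x, hx1, hx2⟩ := tr_pred hG v (f u) _ a2
      have hsub : (({u, u', x} : Finset V) : Set V) ⊆ G.neighborSet (f u) := by
        intro y hy
        simp only [coe_insert, coe_singleton, Set.mem_insert_iff, Set.mem_singleton_iff] at hy
        rcases hy with rfl | rfl | rfl
        · exact a1
        · exact b1
        · exact hx1.symm
      have hle := Set.ncard_le_ncard hsub (Set.toFinite _)
      rw [h2, Set.ncard_coe_finset, Finset.card_eq_three.mpr] at hle
      · omega
      · refine ⟨u, u', x, hne, ?_, ?_, rfl⟩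
        · rintro rfl; omega
        · rintro rfl; omega

lemma tr_iso [Fintype V] {G : SimpleGraph V} (hG : G.Connected) (hn : 2 < Fintype.card V)
    (h2 : ∀ v, (G.neighborSet v).ncard = 2) :
    Nonempty (G ≃g cycleGraph (Fintype.card V)) := by
  classical
  have hcyc : G.IsCycles := fun v _ => h2 v
  obtain ⟨v⟩ := hG.nonempty
  obtain ⟨p, hp, hps⟩ := hcyc.exists_cycle_toSubgraph_verts_eq_connectedComponentSupp
    (v := v) (c := G.connectedComponentMk v) (by simp)
    (Set.nonempty_of_ncard_ne_zero (by rw [h2]; norm_num))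
  have hsupp : ∀ w, w ∈ p.support := by
    intro w
    rw [← Walk.mem_verts_toSubgraph, hps, ConnectedComponent.mem_supp_iff,
      ConnectedComponent.eq]
    exact hG.preconnected w v
  have hlen : p.length = Fintype.card V := by
    have : p.IsHamiltonianCycle := by
      rw [Walk.isHamiltonianCycle_isCycle_and_isHamiltonian_tail]
      refine ⟨hp, hp.isPath_tail.isHamiltonian_of_mem fun w => ?_⟩
      rw [Walk.support_tail_of_not_nil _ hp.not_nil]
      have := hsupp w
      rw [Walk.mem_support_iff] at this
      rcases this with rfl | h
      · exact Walk.end_mem_tail_support hp.not_nil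
      · exact h
    exact this.length_eq
  obtain ⟨f⟩ := (cycleGraph_isContained_iff hn).mpr ⟨v, p, hp, hlen⟩
  have hbij : Function.Bijective f.toHom :=
    (Fintype.bijective_iff_injective_and_card _).mpr ⟨f.injective, by simp⟩
  have hdeg : ∀ x, ((cycleGraph (Fintype.card V)).neighborSet x).ncard = 2 := by
    obtain ⟨m, hm⟩ : ∃ m, Fintype.card V = m + 3 := ⟨Fintype.card V - 3, by omega⟩
    rw [hm]
    intro x
    have := cycleGraph_degree_three_le (v := x)
    rw [← card_neighborSet_eq_degree, ← Nat.card_eq_fintype_card] at this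
    exact this
  refine ⟨RelIso.symm ⟨Equiv.ofBijective _ hbij, ?_⟩⟩
  intro a b
  constructor
  · intro hab
    have himg : f.toHom '' ((cycleGraph (Fintype.card V)).neighborSet a)
        = G.neighborSet (f.toHom a) := by
      apply Set.eq_of_subset_of_ncard_le _ _ (Set.toFinite _)
      · rintro _ ⟨y, hy, rfl⟩
        exact f.toHom.map_adj hy
      · rw [Set.ncard_image_of_injective _ f.injective, h2, hdeg]
    have hb : f.toHom b ∈ G.neighborSet (f.toHom a) := hab
    rw [← himg] at hb
    obtain ⟨y, hy, hyb⟩ := hb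
    obtain rfl := f.injective hyb
    exact hy
  · intro hab
    exact f.toHom.map_adj hab

lemma tr_reg_of_iso [Fintype V] {G : SimpleGraph V} (hn : 2 < Fintype.card V)
    (e : G ≃g cycleGraph (Fintype.card V)) (v : V) : (G.neighborSet v).ncard = 2 := by
  classical
  have hdeg : ∀ x, ((cycleGraph (Fintype.card V)).neighborSet x).ncard = 2 := by
    obtain ⟨m, hm⟩ : ∃ m, Fintype.card V = m + 3 := ⟨Fintype.card V - 3, by omega⟩
    rw [hm]
    intro x
    have := cycleGraph_degree_three_le (v := x)
    rw [← card_neighborSet_eq_degree, ← Nat.card_eq_fintype_card] at this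
    exact this
  rw [← hdeg (e v)]
  exact Nat.card_congr (e.mapNeighborSet v)

end helpers

/-- If `G` is a connected `k`-transmission-regular graph on `n` vertices, then
`k ≤ ⌊n²/4⌋`; moreover, for `n > 2`, `k = ⌊n²/4⌋` holds iff `G` is the cycle `C_n`. -/
theorem transmissionRegular_upper_bound {V : Type*} [Fintype V] (G : SimpleGraph V)
    (hG : G.Connected) (k : ℕ) (htr : ∀ v : V, transmission G v = k) :
    k ≤ Fintype.card V ^ 2 / 4 ∧
      (2 < Fintype.card V → (k = Fintype.card V ^ 2 / 4 ↔
        Nonempty (G ≃g cycleGraph (Fintype.card V)))) := by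
  have hle : k ≤ Fintype.card V ^ 2 / 4 := by
    obtain ⟨v⟩ := hG.nonempty
    rw [← htr v, tr_layer G v _ (tr_N G v), ← tr_sum_bound _ (Fintype.card V + transmission G v)
      (by omega)]
    exact Finset.sum_le_sum fun j _ => tr_g_le hG k htr v j
  refine ⟨hle, fun hn => ⟨fun heq => ?_, fun ⟨e⟩ => le_antisymm hle ?_⟩⟩
  · apply tr_iso hG hn
    intro v
    rw [← htr v, tr_layer G v _ (tr_N G v), ← tr_sum_bound _ (Fintype.card V + transmission G v)
      (by omega), Finset.sum_eq_sum_iff_of_le fun j _ => tr_g_le hG k htr v j] at heq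
    have h1 := heq 1 (by simp only [mem_range]; omega)
    have h0 := tr_zero hG v
    have hs := tr_step G v 0
    rw [zero_add] at hs
    rw [← tr_level_one]
    omega
  · have h2 := tr_reg_of_iso hn e
    obtain ⟨v⟩ := hG.nonempty
    rw [← htr v, tr_layer G v _ (tr_N G v), ← tr_sum_bound _ (Fintype.card V + transmission G v)
      (by omega)]
    refine Finset.sum_le_sum fun j _ => ?_
    induction j with
    | zero => rw [tr_zero hG]; omega
    | succ j ih =>
      have := tr_level_anti hG h2 v j
      have := tr_step G v j
      have := ih (by simp_all; omega)
      omega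
end

section
/- Let b ≥ 2 and let G be a connected graph on n vertices in which every block (maximal 2-connected subgraph, where an edge that is a bridge together with its endpoints also counts as a block) is a clique of order b. Then the Wiener index of G satisfies W(G) = (nb/2)·Σ_{i=1}^{n−1} 1/μ_i, where μ_1 ≥ μ_2 ≥ ⋯ ≥ μ_{n−1} > μ_n = 0 are the eigenvalues of the Laplacian matrix of G. -/
open SimpleGraph Finset Polynomial

/-- A set `B` of vertices of `G` is a *block* if the induced subgraph `G[B]` is connected
and has no cut vertex (so that `G[B]` is 2-connected, a single edge, or a single vertex),
and `B` is maximal with these properties. -/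
def IsBlock {V : Type*} (G : SimpleGraph V) (B : Set V) : Prop :=
  (G.induce B).Connected ∧
  (∀ v ∈ B, (B \ {v}).Nonempty → (G.induce (B \ {v})).Connected) ∧
  ∀ C : Set V, B ⊆ C → (G.induce C).Connected →
    (∀ v ∈ C, (C \ {v}).Nonempty → (G.induce (C \ {v})).Connected) → B = C

/-- `S` induces a connected graph without cut vertex. -/
def GoodSet {V : Type*} (G : SimpleGraph V) (B : Set V) : Prop :=
  (G.induce B).Connected ∧ (∀ v ∈ B, (B \ {v}).Nonempty → (G.induce (B \ {v})).Connected)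

lemma GoodSet.exists_block {V : Type*} [Finite V] {G : SimpleGraph V} {S : Set V}
    (h : GoodSet G S) : ∃ B, IsBlock G B ∧ S ⊆ B := by
  obtain ⟨B, hSB, hB⟩ := Finite.exists_le_maximal h
  refine ⟨B, ⟨hB.prop.1, hB.prop.2, fun C hC h1 h2 => ?_⟩, hSB⟩
  exact Set.Subset.antisymm hC (hB.2 ⟨h1, h2⟩ hC)

lemma goodSet_union {V : Type*} {G : SimpleGraph V} {S T : Set V}
    (hS : GoodSet G S) (hT : GoodSet G T) {a b : V} (hab : a ≠ b)
    (haS : a ∈ S) (haT : a ∈ T) (hbS : b ∈ S) (hbT : b ∈ T) : GoodSet G (S ∪ T) := by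
  have key : ∀ (R : Set V), GoodSet G R → a ∈ R → b ∈ R → ∀ v,
      (G.induce (R \ {v})).Connected := by
    intro R hR ha hb v
    by_cases hv : v ∈ R
    · apply hR.2 v hv
      by_cases h : a = v
      · exact ⟨b, hb, fun h' => hab (h.trans h'.symm)⟩
      · exact ⟨a, ha, h⟩
    · rw [Set.sdiff_singleton_eq_self hv]; exact hR.1
  refine ⟨induce_union_connected hS.1.preconnected hT.1.preconnected ⟨a, haS, haT⟩,
    fun v _ _ => ?_⟩
  · rw [Set.union_sdiff_distrib]
    refine induce_union_connected (key S hS haS hbS v).preconnected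
      (key T hT haT hbT v).preconnected ?_
    by_cases h : a = v
    · exact ⟨b, ⟨hbS, fun h' => hab (h.trans h'.symm)⟩, ⟨hbT, fun h' => hab (h.trans h'.symm)⟩⟩
    · exact ⟨a, ⟨haS, h⟩, ⟨haT, h⟩⟩

lemma IsBlock.goodSet {V : Type*} {G : SimpleGraph V} {B : Set V} (h : IsBlock G B) :
    GoodSet G B := ⟨h.1, h.2.1⟩

lemma IsBlock.eq_of_two {V : Type*} {G : SimpleGraph V} {S T : Set V}
    (hS : IsBlock G S) (hT : IsBlock G T) {a b : V} (hab : a ≠ b)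
    (haS : a ∈ S) (haT : a ∈ T) (hbS : b ∈ S) (hbT : b ∈ T) : S = T := by
  have h := goodSet_union hS.goodSet hT.goodSet hab haS haT hbS hbT
  exact (hS.2.2 _ Set.subset_union_left h.1 h.2).trans
    (hT.2.2 _ Set.subset_union_right h.1 h.2).symm

lemma goodSet_pair {V : Type*} {G : SimpleGraph V} {u w : V} (h : G.Adj u w) :
    GoodSet G {u, w} := by
  refine ⟨induce_pair_connected_of_adj h, fun v hv _ => ?_⟩
  have hs : ∀ x : V, (G.induce {x}).Connected := fun x => by
    have := (Walk.nil : G.Walk x x).connected_induce_support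
    simpa using this
  rcases hv with rfl | rfl
  · have : ({v, w} : Set V) \ {v} = {w} := by ext x; simp; grind [h.ne]
    rw [this]; exact hs w
  · have : ({u, v} : Set V) \ {v} = {u} := by ext x; simp; grind [h.ne]
    rw [this]; exact hs u

lemma cycle_diff_connected {V : Type*} {G : SimpleGraph V} {v : V} (c : G.Walk v v)
    (hc : c.IsCycle) : (G.induce ({x | x ∈ c.support} \ {v})).Connected := by
  cases c with
  | nil => simp at hc
  | @cons _ w _ h q =>
    rw [Walk.cons_isCycle_iff] at hc
    obtain ⟨hq, -⟩ := hc
    have hr := hq.reverse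
    have hsup : ∀ x, x ∈ q.support ↔ x ∈ q.reverse.support := by simp
    generalize q.reverse = r at hr hsup
    cases r with
    | nil => exact absurd rfl h.ne
    | cons h' r =>
      rw [Walk.cons_isPath_iff] at hr
      have : ({x | x ∈ (Walk.cons h q).support} \ {v} : Set V) = {x | x ∈ r.support} := by
        ext x
        simp only [Walk.support_cons, List.mem_cons, Set.mem_sdiff, Set.mem_ofPred_eq,
          Set.mem_singleton_iff, hsup]
        constructor
        · tauto
        · intro hx
          refine ⟨Or.inr (Or.inr hx), ?_⟩
          rintro rfl
          exact hr.2 hx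
      rw [this]
      exact r.connected_induce_support

lemma goodSet_cycle {V : Type*} [DecidableEq V] {G : SimpleGraph V} {v : V} (c : G.Walk v v)
    (hc : c.IsCycle) : GoodSet G {x | x ∈ c.support} := by
  refine ⟨c.connected_induce_support, fun x hx _ => ?_⟩
  have h := cycle_diff_connected (c.rotate x hx) (by simpa using hc)
  have e : {y | y ∈ (c.rotate x hx).support} = {y | y ∈ c.support} := by
    ext y; simp
  rwa [e] at h

lemma gate {V : Type*} [Finite V] [DecidableEq V] {G : SimpleGraph V} {B : Set V}
    (hB : IsBlock G B) (hcl : G.IsClique B) {a a' y : V} (ha : a ∈ B) (ha' : a' ∈ B)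
    (hay : G.Adj a y) (q : G.Walk y a') (hq : a ∉ q.support) : y ∈ B := by
  by_cases hyB : y ∈ B
  · exact hyB
  have hne : a ≠ a' := by rintro rfl; exact hq q.end_mem_support
  have hadj : G.Adj a' a := (hcl ha ha' hne).symm
  have hp : (Walk.cons hay q.bypass).IsPath := by
    rw [Walk.cons_isPath_iff]
    exact ⟨q.bypass_isPath, fun h => hq (q.support_bypass_subset_support h)⟩
  have hc : (Walk.cons hadj (Walk.cons hay q.bypass)).IsCycle := by
    rw [Walk.cons_isCycle_iff]
    refine ⟨hp, ?_⟩
    rw [Walk.edges_cons, List.mem_cons]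
    rintro (h | h)
    · rw [Sym2.eq_iff] at h
      rcases h with ⟨h1, h2⟩ | ⟨h1, h2⟩
      · exact hne h1.symm
      · exact hyB (h1 ▸ ha')
    · exact hq (q.support_bypass_subset_support (Walk.snd_mem_support_of_mem_edges _ h))
  obtain ⟨B', hB', hsub⟩ := (goodSet_cycle _ hc).exists_block
  have e : B = B' := hB.eq_of_two hB' hne ha (hsub (by simp)) ha' (hsub (by simp))
  rw [e]
  exact hsub (by simp)

/-- every vertex on a geodesic is no farther from the end than the start -/
lemma exists_walk_avoid {V : Type*} [DecidableEq V] {G : SimpleGraph V} (hG : G.Connected)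
    {u x v : V} (hux : u ≠ x) (h : G.dist x v ≤ G.dist u v) :
    ∃ p : G.Walk x v, u ∉ p.support := by
  obtain ⟨p, hp⟩ := hG.exists_walk_length_eq_dist x v
  refine ⟨p, fun hu => ?_⟩
  have h1 : (p.takeUntil u hu).length + (p.dropUntil u hu).length = p.length := by
    rw [← Walk.length_append, p.take_spec hu]
  have h2 := dist_le (p.dropUntil u hu)
  have h3 := dist_le (p.takeUntil u hu)
  have h4 := hG.pos_dist_of_ne hux.symm
  omega

lemma exists_closer {V : Type*} {G : SimpleGraph V} (hG : G.Connected)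
    {u v : V} (huv : u ≠ v) : ∃ w, G.Adj u w ∧ G.dist u v = G.dist w v + 1 := by
  obtain ⟨p, hp⟩ := hG.exists_walk_length_eq_dist u v
  cases p with
  | nil => exact absurd rfl huv
  | @cons _ w _ h q =>
    refine ⟨w, h, ?_⟩
    have h1 := dist_le q
    have h2 := hG.dist_triangle (u := u) (v := w) (w := v)
    have h3 := dist_eq_one_iff_adj.2 h
    rw [Walk.length_cons] at hp
    omega

section
variable {V : Type*} [Fintype V] [DecidableEq V] {G : SimpleGraph V} {b : ℕ}

lemma mem_block_of_dist_le (hG : G.Connected)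
    (hblocks : ∀ B : Set V, IsBlock G B → G.IsClique B ∧ B.ncard = b)
    {u v w x : V} {B : Set V} (hB : IsBlock G B) (hu : u ∈ B) (hw : w ∈ B)
    (huw : u ≠ w) (hd : G.dist w v ≤ G.dist u v) (hx : G.Adj u x)
    (hxd : G.dist x v ≤ G.dist u v) : x ∈ B := by
  obtain ⟨p, hp⟩ := exists_walk_avoid hG hx.ne hxd
  obtain ⟨q, hq⟩ := exists_walk_avoid hG huw hd
  refine gate hB (hblocks B hB).1 hu hw hx (p.append q.reverse) ?_
  simp [Walk.mem_support_append_iff, hp, hq]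

lemma closer_unique (hG : G.Connected)
    (hblocks : ∀ B : Set V, IsBlock G B → G.IsClique B ∧ B.ncard = b)
    {u v w w' : V} (hw : G.Adj u w) (hw' : G.Adj u w') (h : G.dist u v = G.dist w v + 1)
    (h' : G.dist u v = G.dist w' v + 1) : w' = w := by
  by_contra hne
  obtain ⟨B, hB, hsub⟩ := (goodSet_pair hw).exists_block
  have huB : u ∈ B := hsub (by simp)
  have hwB : w ∈ B := hsub (by simp)
  have hw'B : w' ∈ B := mem_block_of_dist_le (v := v) hG hblocks hB huB hwB hw.ne (by omega) hw' (by omega)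
  have hww : G.Adj w w' := (hblocks B hB).1 hwB hw'B (Ne.symm hne)
  by_cases hwv : w = v
  · subst hwv
    rw [SimpleGraph.dist_self] at h
    have : G.dist w' w = 0 := by omega
    exact hne (hG.dist_eq_zero_iff.1 this)
  obtain ⟨y, hy, hyd⟩ := exists_closer hG hwv
  obtain ⟨B2, hB2, hsub2⟩ := (goodSet_pair hy).exists_block
  have hwB2 : w ∈ B2 := hsub2 (by simp)
  have hyB2 : y ∈ B2 := hsub2 (by simp)
  have hw'B2 : w' ∈ B2 :=
    mem_block_of_dist_le (v := v) hG hblocks hB2 hwB2 hyB2 hy.ne (by omega) hww (by omega)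
  have huB2 : u ∈ B2 := by
    refine gate hB2 (hblocks B2 hB2).1 hwB2 hw'B2 hw.symm (Walk.cons hw' Walk.nil) ?_
    simp [hw.ne.symm, hww.ne]
  have huy : u ≠ y := by rintro rfl; omega
  have hadj := (hblocks B2 hB2).1 huB2 hyB2 huy
  have h2 := hG.dist_triangle (u := u) (v := y) (w := v)
  have h3 := dist_eq_one_iff_adj.2 hadj
  omega

lemma lap_dist [DecidableRel G.Adj] (hG : G.Connected)
    (hblocks : ∀ B : Set V, IsBlock G B → G.IsClique B ∧ B.ncard = b) (u v : V) :
    (G.degree u : ℝ) * (G.dist u v : ℝ) - ∑ x ∈ G.neighborFinset u, (G.dist x v : ℝ) =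
      ((b : ℝ) - G.degree u) - if u = v then (b : ℝ) else 0 := by
  classical
  split_ifs with huv
  · subst huv
    rw [Finset.sum_congr rfl (g := fun _ => (1 : ℝ))]
    · simp
    · intro x hx
      rw [mem_neighborFinset] at hx
      exact_mod_cast dist_eq_one_iff_adj.2 hx.symm
  obtain ⟨w, hw, hd⟩ := exists_closer hG huv
  obtain ⟨B, hB, hsub⟩ := (goodSet_pair hw).exists_block
  have huB : u ∈ B := hsub (by simp)
  have hwB : w ∈ B := hsub (by simp)
  obtain ⟨hcl, hcard⟩ := hblocks B hB
  have hval : ∀ x ∈ G.neighborFinset u, (G.dist u v : ℝ) - G.dist x v =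
      (if x = w then 1 else 0) + (if x ∈ B then 1 else 0) - 1 := by
    intro x hx
    rw [mem_neighborFinset] at hx
    have h1 := hG.dist_triangle (u := u) (v := x) (w := v)
    have h1' := hG.dist_triangle (u := x) (v := u) (w := v)
    have h2 := dist_eq_one_iff_adj.2 hx
    have h2' := dist_eq_one_iff_adj.2 hx.symm
    by_cases hxw : x = w
    · subst hxw
      simp [hwB, hd]
    by_cases hxB : x ∈ B
    · have h3 := dist_eq_one_iff_adj.2 (hcl hxB hwB hxw)
      have h4 := hG.dist_triangle (u := x) (v := w) (w := v)
      have h5 : G.dist u v ≠ G.dist x v + 1 := fun h =>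
        hxw (closer_unique hG hblocks hw hx hd h)
      have : G.dist x v = G.dist u v := by omega
      simp [hxw, hxB, this]
    · have h3 : ¬ G.dist x v ≤ G.dist u v := fun h =>
        hxB (mem_block_of_dist_le (v := v) hG hblocks hB huB hwB hw.ne (by omega) hx h)
      have : G.dist x v = G.dist u v + 1 := by omega
      simp [hxw, hxB, this]
  have hNB : ((G.neighborFinset u).filter (· ∈ B)).card + 1 = b := by
    rw [← hcard, Set.ncard_eq_toFinset_card']
    have : B.toFinset = insert u ((G.neighborFinset u).filter (· ∈ B)) := by
      ext x
      simp only [Set.mem_toFinset, Finset.mem_insert, Finset.mem_filter, mem_neighborFinset]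
      constructor
      · intro hx
        by_cases h : x = u
        · exact Or.inl h
        · exact Or.inr ⟨hcl huB hx (Ne.symm h), hx⟩
      · rintro (rfl | h)
        · exact huB
        · exact h.2
    rw [this, Finset.card_insert_of_notMem (by simp)]
  have hsum : ∑ x ∈ G.neighborFinset u, ((G.dist u v : ℝ) - G.dist x v) = b - G.degree u := by
    rw [Finset.sum_congr rfl hval, Finset.sum_sub_distrib, Finset.sum_add_distrib,
      Finset.sum_ite_eq' , if_pos (by simpa using hw), Finset.sum_boole, ← hNB]
    simp
    ring
  rw [Finset.sum_sub_distrib] at hsum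
  simp only [Finset.sum_const, card_neighborFinset_eq_degree, nsmul_eq_mul] at hsum
  rw [hsum, sub_zero]

end

open Matrix in
lemma spectral_part {V : Type*} [Fintype V] [DecidableEq V]
    (G : SimpleGraph V) [DecidableRel G.Adj] (hG : G.Connected) (b : ℝ)
    (D : Matrix V V ℝ) (hD : ∀ v, D v v = 0)
    (h : G.lapMatrix ℝ * D * G.lapMatrix ℝ = -b • G.lapMatrix ℝ)
    (μ : Fin (Fintype.card V) → ℝ) (hmono : Antitone μ)
    (hμ : (G.lapMatrix ℝ).charpoly = ∏ i : Fin (Fintype.card V), (X - C (μ i))) :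
    ∑ u, ∑ v, D u v = (Fintype.card V : ℝ) * b *
        ∑ i ∈ Finset.univ.filter (fun i : Fin (Fintype.card V) => (i : ℕ) < Fintype.card V - 1),
          1 / μ i := by
  have := hG.nonempty
  have hL := G.isHermitian_lapMatrix ℝ
  set L := G.lapMatrix ℝ with hLdef
  set ev := hL.eigenvalues with hev
  -- matching of the eigenvalues
  have hms : Multiset.map μ Finset.univ.val = Multiset.map ev Finset.univ.val := by
    have h1 := hL.roots_charpoly_eq_eigenvalues
    rw [hμ, Polynomial.roots_prod _ _ (Finset.prod_ne_zero_iff.2 fun i _ => X_sub_C_ne_zero _)] at h1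
    simpa [Multiset.bind_singleton] using h1
  have hnn : ∀ i, 0 ≤ ev i := (G.posSemidef_lapMatrix ℝ).eigenvalues_nonneg
  obtain ⟨i0, hi0⟩ : ∃ i, ev i = 0 := by
    have h1 := hL.det_eq_prod_eigenvalues
    have h0 : L.det = 0 := G.det_lapMatrix_eq_zero
    rw [h0] at h1
    obtain ⟨i, -, hi⟩ := Finset.prod_eq_zero_iff.1 h1.symm
    exact ⟨i, by simpa using hi⟩
  have hμnn : ∀ i, 0 ≤ μ i := by
    intro i
    have : μ i ∈ Multiset.map μ Finset.univ.val := Multiset.mem_map_of_mem _ (Finset.mem_univ i)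
    rw [hms] at this
    obtain ⟨j, -, hj⟩ := Multiset.mem_map.1 this
    rw [← hj]; exact hnn j
  obtain ⟨j0, hj0⟩ : ∃ j, μ j = 0 := by
    have : ev i0 ∈ Multiset.map ev Finset.univ.val := Multiset.mem_map_of_mem _ (Finset.mem_univ i0)
    rw [← hms] at this
    obtain ⟨j, -, hj⟩ := Multiset.mem_map.1 this
    exact ⟨j, hj.trans hi0⟩
  have hsum : ∑ i ∈ Finset.univ.filter
      (fun i : Fin (Fintype.card V) => (i : ℕ) < Fintype.card V - 1), 1 / μ i =
      ∑ i, (ev i)⁻¹ := by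
    have h1 : ∑ i, (ev i)⁻¹ = ∑ i, (μ i)⁻¹ := by
      have := congrArg (fun s => (Multiset.map (fun x : ℝ => x⁻¹) s).sum) hms
      simp only [Multiset.map_map] at this
      exact this.symm
    rw [h1, Finset.sum_filter]
    refine Finset.sum_congr rfl fun i _ => ?_
    split_ifs with hi
    · simp
    · have : μ i ≤ μ j0 := hmono (by rw [Fin.le_def]; omega)
      have : μ i = 0 := le_antisymm (by linarith) (hμnn i)
      simp [this]
  rw [hsum]
  set U : Matrix V V ℝ := (hL.eigenvectorUnitary : Matrix V V ℝ) with hU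
  have hU1 : Uᵀ * U = 1 := by
    have := Unitary.coe_star_mul_self hL.eigenvectorUnitary
    simpa [star_eq_conjTranspose, conjTranspose_eq_transpose_of_trivial] using this
  have hU2 : U * Uᵀ = 1 := mul_eq_one_comm.1 hU1
  have hcol : ∀ i, L *ᵥ (fun v => U v i) = ev i • (fun v => U v i) := by
    intro i
    have := hL.mulVec_eigenvectorBasis i
    exact this
  have hLU : L * U = U * Matrix.diagonal ev := by
    ext v i
    rw [Matrix.mul_diagonal]
    have := congrFun (hcol i) v
    rw [Pi.smul_apply, smul_eq_mul, mul_comm] at this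
    exact this
  have hUL : Uᵀ * L = Matrix.diagonal ev * Uᵀ := by
    have := congrArg Matrix.transpose hLU
    rw [Matrix.transpose_mul, Matrix.transpose_mul, Matrix.diagonal_transpose,
      (G.isSymm_lapMatrix (R := ℝ)).eq] at this
    exact this
  set M := Uᵀ * D * U with hM
  have hMtr : ∑ i, M i i = 0 := by
    have : M.trace = D.trace := by
      rw [hM, Matrix.trace_mul_comm, ← Matrix.mul_assoc, hU2, Matrix.one_mul]
    have h2 : D.trace = 0 := by simp [Matrix.trace, hD]
    rw [h2] at this
    exact this
  have hMd : Matrix.diagonal ev * M * Matrix.diagonal ev = -b • Matrix.diagonal ev := by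
    calc Matrix.diagonal ev * M * Matrix.diagonal ev
        = (Matrix.diagonal ev * Uᵀ) * D * (U * Matrix.diagonal ev) := by
          simp only [hM, Matrix.mul_assoc]
      _ = Uᵀ * (L * D * L) * U := by rw [← hUL, ← hLU]; simp only [Matrix.mul_assoc]
      _ = -b • (Uᵀ * L * U) := by rw [h, Matrix.mul_smul, Matrix.smul_mul]
      _ = -b • Matrix.diagonal ev := by
          rw [Matrix.mul_assoc, hLU, ← Matrix.mul_assoc, hU1, Matrix.one_mul]
  have hMi : ∀ i, ev i * M i i * ev i = -b * ev i := by
    intro i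
    have := congrFun (congrFun hMd i) i
    simpa using this
  have hn : (Fintype.card V : ℝ) ≠ 0 := by exact_mod_cast Fintype.card_ne_zero
  have hconst : ∀ i, ev i = 0 → ∀ u v, U u i = U v i := by
    intro i hi u v
    have h1 := hcol i
    rw [hi, zero_smul] at h1
    exact (G.lapMatrix_mulVec_eq_zero_iff_forall_reachable.1 h1) u v (hG u v)
  let v0 : V := Classical.arbitrary V
  have horth : ∀ i j, ev i = 0 → ev j = 0 →
      (Fintype.card V : ℝ) * (U v0 i * U v0 j) = (1 : Matrix V V ℝ) i j := by
    intro i j hi hj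
    rw [← hU1, Matrix.mul_apply]
    rw [Finset.sum_congr rfl (g := fun _ => U v0 i * U v0 j)]
    · simp
    · intro v _
      rw [Matrix.transpose_apply, hconst i hi v v0, hconst j hj v v0]
  have huniq : ∀ j, ev j = 0 → j = i0 := by
    intro j hj
    by_contra hne
    have h1 := horth i0 i0 hi0 hi0
    have h2 := horth j j hj hj
    have h3 := horth j i0 hj hi0
    rw [Matrix.one_apply_eq] at h1 h2
    rw [Matrix.one_apply_ne hne] at h3
    have h4 : U v0 j * U v0 i0 = 0 := by
      rcases mul_eq_zero.1 h3 with h | h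
      · exact absurd h hn
      · exact h
    rcases mul_eq_zero.1 h4 with h | h <;> simp [h] at h1 h2
  have hM0 : (Fintype.card V : ℝ) * M i0 i0 = ∑ u, ∑ v, D u v := by
    have h1 := horth i0 i0 hi0 hi0
    rw [Matrix.one_apply_eq] at h1
    have : M i0 i0 = (U v0 i0 * U v0 i0) * ∑ u, ∑ v, D u v := by
      rw [hM, Matrix.mul_apply, Finset.sum_comm (f := fun u v => D u v), Finset.mul_sum]
      refine Finset.sum_congr rfl fun v _ => ?_
      rw [Matrix.mul_apply, Finset.sum_mul, Finset.mul_sum]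
      refine Finset.sum_congr rfl fun u _ => ?_
      rw [Matrix.transpose_apply, hconst i0 hi0 v v0, hconst i0 hi0 u v0]
      ring
    rw [this, ← mul_assoc, h1, one_mul]
  have hMall : ∀ i, M i i = -b * (ev i)⁻¹ + if i = i0 then M i0 i0 else 0 := by
    intro i
    split_ifs with hi
    · subst hi; simp [hi0]
    · have hne : ev i ≠ 0 := fun h => hi (huniq i h)
      have := hMi i
      field_simp
      have h2 : ev i * (M i i * ev i) = ev i * (-b) := by linarith
      have := mul_left_cancel₀ hne h2
      linarith
  have hfin : 0 = -b * ∑ i, (ev i)⁻¹ + M i0 i0 := by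
    rw [← hMtr, Finset.mul_sum, Finset.sum_congr rfl fun i _ => hMall i, Finset.sum_add_distrib]
    simp
  have : M i0 i0 = b * ∑ i, (ev i)⁻¹ := by linarith
  rw [← hM0, this]; ring

open Matrix in
lemma lap_dist_lap {V : Type*} [Fintype V] [DecidableEq V]
    (G : SimpleGraph V) [DecidableRel G.Adj] (hG : G.Connected) (b : ℕ)
    (hblocks : ∀ B : Set V, IsBlock G B → G.IsClique B ∧ B.ncard = b) :
    G.lapMatrix ℝ * (Matrix.of fun u v => (G.dist u v : ℝ)) * G.lapMatrix ℝ =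
      -(b : ℝ) • G.lapMatrix ℝ := by
  have h1 : G.lapMatrix ℝ * (Matrix.of fun u v => (G.dist u v : ℝ)) =
      Matrix.vecMulVec (fun u => (b : ℝ) - G.degree u) (fun _ => 1) - (b : ℝ) • 1 := by
    ext u v
    have h := lap_dist hG hblocks u v
    rw [← G.lapMatrix_mulVec_apply u (fun x => (G.dist x v : ℝ))] at h
    refine Eq.trans h ?_
    simp [Matrix.vecMulVec_apply, Matrix.one_apply]
  have h2 : (fun _ => (1 : ℝ)) ᵥ* G.lapMatrix ℝ = 0 := by
    rw [← Matrix.mulVec_transpose, (G.isSymm_lapMatrix (R := ℝ)).eq]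
    exact G.lapMatrix_mulVec_const_eq_zero
  rw [h1, Matrix.sub_mul, Matrix.vecMulVec_mul, h2]
  simp

/-- Let `G` be a connected graph on `n` vertices in which every block is a clique of order
`b ≥ 2`, and let `μ 0 ≥ μ 1 ≥ ⋯ ≥ μ (n-1) = 0` be the eigenvalues of the Laplacian matrix
of `G` (listed with multiplicity, in nonincreasing order). Then
`W(G) = (n b / 2) · ∑_{i=1}^{n-1} 1/μ_i`. -/
theorem wienerIndex_blockClique {V : Type*} [Fintype V] [DecidableEq V]
    (G : SimpleGraph V) [DecidableRel G.Adj] (hG : G.Connected) (b : ℕ) (hb : 2 ≤ b)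
    (hblocks : ∀ B : Set V, IsBlock G B → G.IsClique B ∧ B.ncard = b)
    (μ : Fin (Fintype.card V) → ℝ) (hmono : Antitone μ)
    (hμ : (G.lapMatrix ℝ).charpoly = ∏ i : Fin (Fintype.card V), (X - C (μ i))) :
    (wienerIndex G : ℝ) =
      ((Fintype.card V : ℝ) * b / 2) *
        ∑ i ∈ Finset.univ.filter (fun i : Fin (Fintype.card V) => (i : ℕ) < Fintype.card V - 1),
          1 / μ i := by
  have h := spectral_part G hG b (Matrix.of fun u v => (G.dist u v : ℝ)) (by simp)
    (lap_dist_lap G hG b hblocks) μ hmono hμ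
  simp only [Matrix.of_apply] at h
  rw [wienerIndex]
  push_cast
  rw [h]
  ring
end

section
/- If G is a tree on n vertices, then its Wiener index satisfies W(G) = n·Σ_{i=1}^{n−1} 1/μ_i, where μ_1 ≥ μ_2 ≥ ⋯ ≥ μ_{n−1} > μ_n = 0 are the eigenvalues of the Laplacian matrix of G. -/
open SimpleGraph Finset Polynomial

lemma tree_closer {V : Type*} {G : SimpleGraph V} (hG : G.IsTree) {u v : V} (huv : u ≠ v) :
    ∃ w0, G.Adj u w0 ∧ G.dist v u = G.dist v w0 + 1 ∧
      ∀ w, G.Adj u w → w ≠ w0 → G.dist v w = G.dist v u + 1 := by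
  obtain ⟨p, hp, hl⟩ := hG.connected.exists_path_of_dist u v
  cases p with
  | nil => exact absurd rfl huv
  | @cons _ w0 _ h q =>
    have key : ∀ w, G.Adj u w → G.dist v u = G.dist v w + 1 → w = w0 := by
      intro w hw hd
      obtain ⟨r, hr⟩ := hG.connected.exists_walk_length_eq_dist w v
      have hP : (Walk.cons hw r).IsPath := by
        apply Walk.isPath_of_length_eq_dist
        rw [Walk.length_cons, hr, G.dist_comm (u := u), hd, G.dist_comm]
      have := (hG.existsUnique_path u v).unique hP hp
      simp only [Walk.cons.injEq] at this
      exact this.1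
    refine ⟨w0, h, ?_, ?_⟩
    · have h1 : G.dist w0 v ≤ q.length := dist_le q
      rw [Walk.length_cons] at hl
      rcases hG.dist_eq_dist_add_one_of_adj v h with h2 | h2
      · exact h2
      · rw [G.dist_comm (u := v), G.dist_comm (u := v)] at h2
        omega
    · intro w hw hne
      rcases hG.dist_eq_dist_add_one_of_adj v hw with h2 | h2
      · exact absurd (key w hw h2) hne
      · exact h2

lemma lap_dist_s16 {V : Type*} [Fintype V] [DecidableEq V]
    (G : SimpleGraph V) [DecidableRel G.Adj] (hG : G.IsTree) (u v : V) :
    (G.lapMatrix ℝ).mulVec (fun w => (G.dist v w : ℝ)) u =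
      (2 - (G.degree u : ℝ)) - (if u = v then 2 else 0) := by
  rw [lapMatrix_mulVec_apply]
  by_cases huv : u = v
  · subst huv
    have : ∑ w ∈ G.neighborFinset u, (G.dist u w : ℝ) = ∑ w ∈ G.neighborFinset u, 1 := by
      apply Finset.sum_congr rfl
      intro w hw
      rw [mem_neighborFinset] at hw
      rw [dist_eq_one_iff_adj.2 hw]
      simp
    rw [this]
    simp
  · obtain ⟨w0, h0, hd, hw⟩ := tree_closer hG huv
    have : ∑ w ∈ G.neighborFinset u, (G.dist v w : ℝ) =
        ∑ w ∈ G.neighborFinset u, ((G.dist v u : ℝ) + 1 - if w = w0 then 2 else 0) := by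
      apply Finset.sum_congr rfl
      intro w hw'
      rw [mem_neighborFinset] at hw'
      by_cases h : w = w0
      · subst h
        rw [hd]
        push_cast
        simp
        ring
      · rw [hw w hw' h]
        simp [h]
    rw [this, Finset.sum_sub_distrib, Finset.sum_ite_eq']
    simp [h0, huv]
    ring

lemma eigen_dist {V : Type*} [Fintype V] [DecidableEq V]
    (G : SimpleGraph V) [DecidableRel G.Adj] (hG : G.IsTree) (x : V → ℝ) (l : ℝ)
    (hx : (G.lapMatrix ℝ).mulVec x = l • x) (hn : ∑ u, x u * x u = 1) :
    ∑ u, ∑ v, x u * x v * (G.dist u v : ℝ) =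
      -2 * (1 / l) + (∑ u, x u) ^ 2 * ((∑ u, ∑ v, (G.dist u v : ℝ)) / (Fintype.card V : ℝ) ^ 2) := by
  have hsym : ∀ y : V → ℝ, dotProduct ((G.lapMatrix ℝ).mulVec x) y =
      dotProduct x ((G.lapMatrix ℝ).mulVec y) := by
    intro y
    rw [Matrix.dotProduct_mulVec, ← Matrix.mulVec_transpose, (isSymm_lapMatrix (R := ℝ) G).eq]
  have hne : Nonempty V := hG.connected.nonempty
  have hc : (Fintype.card V : ℝ) ≠ 0 := by
    exact_mod_cast Fintype.card_ne_zero
  by_cases hl : l = 0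
  · subst hl
    rw [zero_smul, lapMatrix_mulVec_eq_zero_iff_forall_reachable] at hx
    obtain ⟨a⟩ := hne
    have hxa : ∀ u, x u = x a := fun u => hx u a (hG.connected u a)
    simp only [hxa, ← Finset.mul_sum]
    simp
    field_simp
  · have h1 : ∑ u, x u = 0 := by
      have := hsym (fun _ => 1)
      rw [lapMatrix_mulVec_const_eq_zero, hx] at this
      simp [dotProduct, ← Finset.mul_sum, hl] at this
      exact this
    have h2 : ∀ v, l * ∑ u, x u * (G.dist v u : ℝ) =
        ∑ u, x u * (2 - (G.degree u : ℝ)) - 2 * x v := by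
      intro v
      have := hsym (fun w => (G.dist v w : ℝ))
      rw [hx] at this
      simp only [dotProduct, lap_dist_s16 G hG, Pi.smul_apply, smul_eq_mul] at this
      rw [Finset.mul_sum]
      simp only [mul_assoc, mul_sub, mul_ite, mul_zero, Finset.sum_sub_distrib,
        Finset.sum_ite_eq', Finset.sum_ite_eq, Finset.mem_univ, if_true] at this ⊢
      linarith
    have h3 : l * ∑ u, ∑ v, x u * x v * (G.dist u v : ℝ) = -2 := by
      have : l * ∑ u, ∑ v, x u * x v * (G.dist u v : ℝ) =
          ∑ u, x u * (l * ∑ v, x v * (G.dist u v : ℝ)) := by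
        simp only [Finset.mul_sum]
        refine Finset.sum_congr rfl fun u _ => Finset.sum_congr rfl fun v _ => by ring
      rw [this]
      simp only [h2]
      simp only [mul_sub (x _) (∑ u, x u * (2 - (G.degree u : ℝ)))]
      rw [Finset.sum_sub_distrib, ← Finset.sum_mul, h1, zero_mul, zero_sub]
      have : ∑ u, x u * (2 * x u) = 2 * ∑ u, x u * x u := by
        rw [Finset.mul_sum]
        exact Finset.sum_congr rfl fun u _ => by ring
      rw [this, hn]
      norm_num
    rw [h1, mul_one_div, eq_div_of_mul_eq hl ((mul_comm _ _).trans h3)]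
    ring

lemma dist_eigen {V : Type*} [Fintype V] [DecidableEq V]
    (G : SimpleGraph V) [DecidableRel G.Adj] (hG : G.IsTree)
    (hL : (G.lapMatrix ℝ).IsHermitian) :
    (∑ u, ∑ v, (G.dist u v : ℝ)) = 2 * Fintype.card V * ∑ i, 1 / hL.eigenvalues i := by
  set U : Matrix V V ℝ := (hL.eigenvectorUnitary : Matrix V V ℝ) with hU
  have hUU : U * star U = 1 := Unitary.coe_mul_star_self _
  have hUU' : star U * U = 1 := Unitary.coe_star_mul_self _
  have hcol : ∀ i, ∑ u, U u i * U u i = 1 := by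
    intro i
    have := congrFun (congrFun hUU' i) i
    simpa [Matrix.mul_apply, Matrix.star_apply] using this
  have hrow : ∀ u v, ∑ i, U u i * U v i = if u = v then 1 else 0 := by
    intro u v
    have := congrFun (congrFun hUU u) v
    simpa [Matrix.mul_apply, Matrix.star_apply, Matrix.one_apply] using this
  have he : ∀ i, (G.lapMatrix ℝ).mulVec (fun u => U u i) =
      hL.eigenvalues i • (fun u => U u i) := fun i => hL.mulVec_eigenvectorBasis i
  have hsum := Finset.sum_congr (rfl : (Finset.univ : Finset V) = _)
    (fun i _ => eigen_dist G hG (fun u => U u i) _ (he i) (hcol i))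
  have hswap : ∀ f : V → V → ℝ, ∑ i, ∑ u, ∑ v, U u i * U v i * f u v = ∑ u, f u u := by
    intro f
    rw [Finset.sum_comm]
    refine Finset.sum_congr rfl fun u _ => ?_
    rw [Finset.sum_comm]
    simp only [← Finset.sum_mul, hrow]
    simp
  rw [hswap, Finset.sum_add_distrib, ← Finset.mul_sum, ← Finset.sum_mul] at hsum
  have hp : ∑ i, (∑ u, U u i) ^ 2 = Fintype.card V := by
    have := hswap (fun _ _ => 1)
    simp only [mul_one] at this
    simp only [sq, Finset.sum_mul_sum]
    rw [this]
    simp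
  rw [hp] at hsum
  have hne : Nonempty V := hG.connected.nonempty
  have hc : (Fintype.card V : ℝ) ≠ 0 := by
    exact_mod_cast Fintype.card_ne_zero
  simp only [dist_self, Nat.cast_zero, Finset.sum_const_zero] at hsum
  generalize ∑ u, ∑ v, (G.dist u v : ℝ) = S at *
  generalize ∑ i, 1 / hL.eigenvalues i = T at *
  field_simp at hsum
  linarith

/-- If `G` is a tree on `n` vertices with Laplacian eigenvalues
`μ 0 ≥ μ 1 ≥ ⋯ ≥ μ (n-1) = 0` (listed with multiplicity, in nonincreasing order), then
`W(G) = n · ∑_{i=1}^{n-1} 1/μ_i`. -/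
theorem wienerIndex_tree {V : Type*} [Fintype V] [DecidableEq V]
    (G : SimpleGraph V) [DecidableRel G.Adj] (hG : G.IsTree)
    (μ : Fin (Fintype.card V) → ℝ) (hmono : Antitone μ)
    (hμ : (G.lapMatrix ℝ).charpoly = ∏ i : Fin (Fintype.card V), (X - C (μ i))) :
    (wienerIndex G : ℝ) =
      (Fintype.card V : ℝ) *
        ∑ i ∈ Finset.univ.filter (fun i : Fin (Fintype.card V) => (i : ℕ) < Fintype.card V - 1),
          1 / μ i := by
  have hL := isHermitian_lapMatrix (R := ℝ) G
  have hne : Nonempty V := hG.connected.nonempty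
  have hpos : 0 < Fintype.card V := Fintype.card_pos
  have hroots : (Finset.univ.val.map μ) = Finset.univ.val.map hL.eigenvalues := by
    have h1 := congrArg Polynomial.roots (hμ.symm.trans hL.charpoly_eq)
    have h2 : ∀ {ι : Type _} (s : Finset ι) (f : ι → ℝ),
        (∏ i ∈ s, (X - C (f i))).roots = s.val.map f := by
      intro ι s f
      have := Polynomial.roots_multiset_prod_X_sub_C (s.val.map f)
      rwa [Multiset.map_map] at this
    rw [h2] at h1
    rw [h1]
    have := Polynomial.roots_multiset_prod_X_sub_C (Finset.univ.val.map hL.eigenvalues)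
    rw [Multiset.map_map] at this
    exact this
  have hsum : ∑ i, 1 / μ i = ∑ i, 1 / hL.eigenvalues i := by
    have := congrArg (fun s => (s.map (fun t : ℝ => 1 / t)).sum) hroots
    simp only [Multiset.map_map] at this
    exact this
  have hnonneg : ∀ i, 0 ≤ μ i := by
    intro i
    have : μ i ∈ Finset.univ.val.map μ := Multiset.mem_map_of_mem _ (Finset.mem_univ i)
    rw [hroots] at this
    obtain ⟨j, -, hj⟩ := Multiset.mem_map.1 this
    rw [← hj]
    exact (posSemidef_lapMatrix (R := ℝ) G).eigenvalues_nonneg j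
  have hzero : ∃ i, μ i = 0 := by
    have hdet := det_lapMatrix_eq_zero (G := G)
    rw [hL.det_eq_prod_eigenvalues, Finset.prod_eq_zero_iff] at hdet
    obtain ⟨j, -, hj⟩ := hdet
    have : hL.eigenvalues j ∈ Finset.univ.val.map hL.eigenvalues :=
      Multiset.mem_map_of_mem _ (Finset.mem_univ j)
    rw [← hroots] at this
    obtain ⟨i, -, hi⟩ := Multiset.mem_map.1 this
    exact ⟨i, hi.trans (by simpa using hj)⟩
  have hlast : ∀ i : Fin (Fintype.card V), ¬ ((i : ℕ) < Fintype.card V - 1) → μ i = 0 := by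
    intro i hi
    obtain ⟨k, hk⟩ := hzero
    refine le_antisymm ?_ (hnonneg i)
    rw [← hk]
    apply hmono
    rw [Fin.le_def]
    omega
  have hfil : ∑ i ∈ Finset.univ.filter
      (fun i : Fin (Fintype.card V) => (i : ℕ) < Fintype.card V - 1), 1 / μ i = ∑ i, 1 / μ i := by
    apply Finset.sum_filter_of_ne
    intro i _ h
    by_contra hc
    exact h (by simp [hlast i hc])
  rw [hfil, hsum, wienerIndex]
  push_cast
  rw [dist_eigen G hG hL]
  ring
end

section
/- Let k ≥ 1 and let G be a linear k-tree on n ≥ k+1 vertices that has a dominating vertex (a vertex adjacent to all other vertices). Then W(G) = (k² + k)/2 + n² − kn − n. -/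
open SimpleGraph Finset

/-- `G` is a *linear `k`-tree* if it admits a recursive labeling `v_1, …, v_n` of its
vertices (given here by a bijection `f` onto `Fin n`) such that the first `k+1` vertices
form a `(k+1)`-clique, and every later vertex is adjacent to exactly `k` vertices with
smaller labels, which form a `k`-clique containing a vertex whose degree in the graph
induced on the earlier vertices is `k`. -/
def IsLinearKTree {V : Type*} [Fintype V] (k : ℕ) (G : SimpleGraph V) : Prop :=
  ∃ f : V ≃ Fin (Fintype.card V),
    (∀ u w : V, (f u : ℕ) < k + 1 → (f w : ℕ) < k + 1 → u ≠ w → G.Adj u w) ∧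
    ∀ u : V, k + 1 ≤ (f u : ℕ) →
      {w : V | f w < f u ∧ G.Adj w u}.ncard = k ∧
      (∀ w w' : V, f w < f u → f w' < f u → G.Adj w u → G.Adj w' u → w ≠ w' → G.Adj w w') ∧
      ∃ w : V, f w < f u ∧ G.Adj w u ∧ {w' : V | f w' < f u ∧ G.Adj w w'}.ncard = k

lemma dist_of_dominating {V : Type*} (G : SimpleGraph V)
    (hdom : ∃ v : V, ∀ u : V, u ≠ v → G.Adj v u) (u v : V) (huv : u ≠ v)
    (hadj : ¬ G.Adj u v) : G.dist u v = 2 := by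
  obtain ⟨d, hd⟩ := hdom
  have hu : u ≠ d := by
    rintro rfl
    exact hadj (hd v huv.symm)
  have hv : v ≠ d := by
    rintro rfl
    exact hadj (hd u huv).symm
  let p : G.Walk u v := Walk.cons (hd u hu).symm (Walk.cons (hd v hv) Walk.nil)
  have h2 : G.dist u v ≤ 2 := by
    have := SimpleGraph.dist_le p
    simpa [p] using this
  have h0 : G.dist u v ≠ 0 := by
    intro h
    exact huv (p.reachable.dist_eq_zero_iff.1 h)
  have h1 : G.dist u v ≠ 1 := by
    intro h
    exact hadj (SimpleGraph.dist_eq_one_iff_adj.1 h)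
  omega

lemma sum_labels (k n : ℕ) (h : k + 1 ≤ n) :
    ∑ i ∈ range n, (2 * (i : ℚ) - ((min k i : ℕ) : ℚ)) =
      ((k : ℚ) ^ 2 + k) / 2 + (n : ℚ) ^ 2 - k * n - n := by
  induction n, h using Nat.le_induction with
  | base =>
    have : ∑ i ∈ range (k + 1), (2 * (i : ℚ) - ((min k i : ℕ) : ℚ)) = ∑ i ∈ range (k + 1), (i : ℚ) := by
      refine sum_congr rfl fun i hi => ?_
      rw [min_eq_right (by simpa [Nat.lt_succ_iff] using hi)]
      ring
    rw [this]
    have h2 : ∀ m : ℕ, ∑ i ∈ range (m + 1), (i : ℚ) = (m : ℚ) * (m + 1) / 2 := by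
      intro m
      induction m with
      | zero => simp
      | succ m ih => rw [sum_range_succ, ih]; push_cast; ring
    rw [h2]; push_cast; ring
  | succ n hn ih =>
    rw [sum_range_succ, ih, min_eq_left (by omega)]
    push_cast; ring

open Classical in
/-- A linear `k`-tree (`k ≥ 1`) on `n ≥ k + 1` vertices having a dominating vertex has
Wiener index exactly `(k² + k)/2 + n² - kn - n`. -/
lemma wiener_aux {V : Type*} [Fintype V]
    (k : ℕ) (G : SimpleGraph V) (hG : IsLinearKTree k G)
    (hn : k + 1 ≤ Fintype.card V)
    (hdom : ∃ v : V, ∀ u : V, u ≠ v → G.Adj v u) :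
    wienerIndex G =
      ((k : ℚ) ^ 2 + k) / 2 + (Fintype.card V : ℚ) ^ 2 - k * Fintype.card V
        - Fintype.card V := by
  obtain ⟨f, hf, hlater⟩ := hG
  have hcard : ∀ u : V, (univ.filter fun v => f v < f u).card = (f u : ℕ) := by
    intro u
    have : (univ.filter fun v => f v < f u) = (Finset.Iio (f u)).map f.symm.toEmbedding := by
      ext v
      simp [Finset.mem_map_equiv]
    rw [this, card_map, Fin.card_Iio]
  have hadjc : ∀ u : V, (univ.filter fun v => f v < f u ∧ G.Adj v u).card = min k (f u : ℕ) := by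
    intro u
    by_cases h : k + 1 ≤ (f u : ℕ)
    · have := (hlater u h).1
      rw [min_eq_left (by omega), ← this, ← Set.ncard_coe_finset]
      congr 1
      ext v; simp
    · rw [min_eq_right (by omega), ← hcard u]
      congr 1
      ext v
      simp only [mem_filter, mem_univ, true_and, and_iff_left_iff_imp]
      intro hv
      refine hf v u ?_ (by omega) (by rintro rfl; exact lt_irrefl _ hv)
      have : (f v : ℕ) < f u := hv
      omega
  have hS : ∀ u : V, ∑ v : V, (if f v < f u then (G.dist u v : ℚ) else 0) =
      2 * ((f u : ℕ) : ℚ) - (min k (f u : ℕ) : ℕ) := by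
    intro u
    have : ∀ v : V, (if f v < f u then (G.dist u v : ℚ) else 0) =
        2 * (if f v < f u then 1 else 0) - (if f v < f u ∧ G.Adj v u then 1 else 0) := by
      intro v
      by_cases h : f v < f u
      · have hne : u ≠ v := by rintro rfl; exact lt_irrefl _ h
        by_cases ha : G.Adj v u
        · have := SimpleGraph.dist_eq_one_iff_adj.2 ha.symm
          simp only [h, ha, this, and_self, if_true]; norm_num
        · have := dist_of_dominating G hdom u v hne (fun h => ha h.symm)
          simp [h, ha, this]
      · simp [h]
    rw [sum_congr rfl fun v _ => this v, sum_sub_distrib, ← mul_sum, sum_boole, sum_boole,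
      hcard, hadjc]
  have hsym : ∑ u : V, ∑ v : V, (G.dist u v : ℚ) =
      2 * ∑ u : V, ∑ v : V, (if f v < f u then (G.dist u v : ℚ) else 0) := by
    have h1 : ∀ u v : V, (G.dist u v : ℚ) = (if f v < f u then (G.dist u v : ℚ) else 0) +
        (if f u < f v then (G.dist v u : ℚ) else 0) := by
      intro u v
      rcases lt_trichotomy (f u) (f v) with h | h | h
      · simp [h, h.not_gt, SimpleGraph.dist_comm]
      · have := f.injective h
        subst this; simp
      · simp [h, h.not_gt]
    rw [sum_congr rfl fun u _ => sum_congr rfl fun v _ => h1 u v]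
    simp only [sum_add_distrib]
    rw [two_mul]
    congr 1
    exact sum_comm
  unfold wienerIndex
  rw [hsym, mul_div_cancel_left₀ _ (by norm_num), sum_congr rfl fun u _ => hS u,
    ← sum_labels k _ hn, ← Fin.sum_univ_eq_sum_range (fun i : ℕ => 2 * (i : ℚ) - (min k i : ℕ))]
  exact f.sum_comp (fun i => 2 * ((i : ℕ) : ℚ) - (min k (i : ℕ) : ℕ))

/-- A linear `k`-tree (`k ≥ 1`) on `n ≥ k + 1` vertices having a dominating vertex has
Wiener index exactly `(k² + k)/2 + n² - kn - n`. -/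
theorem wienerIndex_linearKTree_dominating {V : Type*} [Fintype V]
    (k : ℕ) (hk : 1 ≤ k) (G : SimpleGraph V) (hG : IsLinearKTree k G)
    (hn : k + 1 ≤ Fintype.card V)
    (hdom : ∃ v : V, ∀ u : V, u ≠ v → G.Adj v u) :
    wienerIndex G =
      ((k : ℚ) ^ 2 + k) / 2 + (Fintype.card V : ℚ) ^ 2 - k * Fintype.card V
        - Fintype.card V :=
  wiener_aux k G hG hn hdom
end

section
/- Let k ≥ 1 and let G be a linear k-tree on n ≥ k+1 vertices. Then the Wiener index of G satisfies W(G) ≤ (j+1)(2j²k² + jk(3 + k − 6n) + 6n² − 6n)/12, where j = ⌊(n−1)/k⌋; moreover, equality is attained by the linear k-tree on vertices v_1,…,v_n in which v_i is adjacent to v_{i−1},…,v_{i−k} (i.e., each vertex is adjacent to exactly the k immediately preceding vertices in the labeling, whenever they exist). -/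
open SimpleGraph Finset

/-- The `k`-th power of a path on `n` vertices: vertex `i` is adjacent to vertex `j`
iff `i ≠ j` and `|i - j| ≤ k`; i.e., each vertex is adjacent to exactly the `k`
immediately preceding vertices in the labeling (whenever they exist). -/
def pathPower (n k : ℕ) : SimpleGraph (Fin n) :=
  SimpleGraph.fromRel (fun i j => (i : ℕ) ≤ (j : ℕ) + k ∧ (j : ℕ) ≤ (i : ℕ) + k)


namespace WienerAux

open Classical in
theorem card_le_label {V : Type*} [Fintype V] {n : ℕ} (f : V ≃ Fin n) (m : ℕ) (hm : m < n) :
    (univ.filter (fun w : V => (f w : ℕ) ≤ m)).card = m + 1 := by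
  have h : (univ.filter (fun w : V => (f w : ℕ) ≤ m)).card = (range (m + 1)).card := by
    refine Finset.card_bij (fun w _ => (f w : ℕ)) ?_ ?_ ?_
    · intro a ha
      simp at ha ⊢
      omega
    · intro a _ b _ hab
      exact f.injective (Fin.ext hab)
    · intro b hb
      simp at hb
      refine ⟨f.symm ⟨b, by omega⟩, ?_, ?_⟩
      · simp
        omega
      · simp
  rw [h, card_range]

open Classical in
/-- Closed neighbourhood of `S` among the vertices of label at most `m`. -/
noncomputable def nb {V : Type*} [Fintype V] {n : ℕ} (f : V ≃ Fin n) (G : SimpleGraph V)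
    (m : ℕ) (S : Finset V) : Finset V :=
  univ.filter (fun w => (f w : ℕ) ≤ m ∧ (w ∈ S ∨ ∃ s ∈ S, G.Adj s w))

theorem mem_nb {V : Type*} [Fintype V] {n : ℕ} (f : V ≃ Fin n) (G : SimpleGraph V)
    (m : ℕ) (S : Finset V) (w : V) :
    w ∈ nb f G m S ↔ (f w : ℕ) ≤ m ∧ (w ∈ S ∨ ∃ s ∈ S, G.Adj s w) := by
  simp [nb]

open Classical in
theorem expansion {V : Type*} [Fintype V] {n : ℕ} (k : ℕ) (f : V ≃ Fin n) (G : SimpleGraph V)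
    (h1 : ∀ u w : V, (f u : ℕ) < k + 1 → (f w : ℕ) < k + 1 → u ≠ w → G.Adj u w)
    (h2 : ∀ u : V, k + 1 ≤ (f u : ℕ) →
      k ≤ (univ.filter (fun w : V => (f w : ℕ) < f u ∧ G.Adj w u)).card)
    (m : ℕ) : m < n → ∀ S : Finset V, S.Nonempty → (∀ s ∈ S, (f s : ℕ) ≤ m) →
      min (m + 1) (S.card + k) ≤ (nb f G m S).card := by
  have base : ∀ m, m ≤ k → m < n → ∀ S : Finset V, S.Nonempty → (∀ s ∈ S, (f s : ℕ) ≤ m) →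
      min (m + 1) (S.card + k) ≤ (nb f G m S).card := by
    intro m hmk hm S hS hSm
    refine le_trans (min_le_left _ _) ?_
    rw [← card_le_label f m hm]
    apply Finset.card_le_card
    intro w hw
    simp only [mem_filter, mem_univ, true_and] at hw
    rw [mem_nb]
    refine ⟨hw, ?_⟩
    obtain ⟨s, hs⟩ := hS
    by_cases hws : w = s
    · left; rw [hws]; exact hs
    · right
      exact ⟨s, hs, h1 s w (by have := hSm s hs; omega) (by omega) (Ne.symm hws)⟩
  induction m with
  | zero => exact base 0 (Nat.zero_le _)
  | succ m ih =>
    intro hm S hS hSm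
    by_cases hmk : m + 1 ≤ k
    · exact base (m + 1) hmk hm S hS hSm
    have ih' := ih (by omega)
    set x : V := f.symm ⟨m + 1, hm⟩ with hx
    have hfx : (f x : ℕ) = m + 1 := by simp [hx]
    have hxu : ∀ w : V, (f w : ℕ) = m + 1 → w = x := by
      intro w hw
      apply f.injective
      apply Fin.ext
      omega
    set N := univ.filter (fun w : V => (f w : ℕ) < f x ∧ G.Adj w x) with hN
    have hNk : k ≤ N.card := h2 x (by omega)
    by_cases hxS : x ∈ S
    · by_cases hS' : (S.erase x).Nonempty
      · have h := ih' (S.erase x) hS' (by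
          intro s hs
          have hs' := Finset.mem_erase.1 hs
          have h3 := hSm s hs'.2
          have h4 : (f s : ℕ) ≠ m + 1 := fun h => hs'.1 (hxu s h)
          omega)
        have hc := Finset.card_erase_add_one hxS
        have hnot : x ∉ nb f G m (S.erase x) := by
          rw [mem_nb]; omega
        have hle : (insert x (nb f G m (S.erase x))).card ≤ (nb f G (m + 1) S).card := by
          apply Finset.card_le_card
          intro w hw
          rw [Finset.mem_insert] at hw
          rw [mem_nb]
          rcases hw with rfl | hw
          · exact ⟨hfx.le, Or.inl hxS⟩
          · rw [mem_nb] at hw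
            refine ⟨by omega, ?_⟩
            rcases hw.2 with h | ⟨s, hs, hsw⟩
            · exact Or.inl (Finset.mem_of_mem_erase h)
            · exact Or.inr ⟨s, Finset.mem_of_mem_erase hs, hsw⟩
        rw [Finset.card_insert_of_notMem hnot] at hle
        omega
      · have hc := Finset.card_erase_add_one hxS
        rw [Finset.not_nonempty_iff_eq_empty] at hS'
        rw [hS'] at hc
        have hnot : x ∉ N := by simp [hN]
        have hle : (insert x N).card ≤ (nb f G (m + 1) S).card := by
          apply Finset.card_le_card
          intro w hw
          rw [Finset.mem_insert] at hw
          rw [mem_nb]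
          rcases hw with rfl | hw
          · exact ⟨hfx.le, Or.inl hxS⟩
          · simp only [hN, mem_filter, mem_univ, true_and] at hw
            exact ⟨by omega, Or.inr ⟨x, hxS, hw.2.symm⟩⟩
        rw [Finset.card_insert_of_notMem hnot] at hle
        simp at hc
        omega
    · have hSm' : ∀ s ∈ S, (f s : ℕ) ≤ m := by
        intro s hs
        have h3 := hSm s hs
        have h4 : (f s : ℕ) ≠ m + 1 := fun h => hxS (hxu s h ▸ hs)
        omega
      have h := ih' S hS hSm'
      have hsub : nb f G m S ⊆ nb f G (m + 1) S := by
        intro w hw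
        rw [mem_nb] at hw ⊢
        exact ⟨by omega, hw.2⟩
      by_cases hxN : x ∈ nb f G (m + 1) S
      · have hnot : x ∉ nb f G m S := by
          rw [mem_nb]; omega
        have hle := Finset.card_le_card (Finset.insert_subset hxN hsub)
        rw [Finset.card_insert_of_notMem hnot] at hle
        omega
      · have hle := Finset.card_le_card hsub
        have hdisj : Disjoint S N := by
          rw [Finset.disjoint_left]
          intro s hs hsN
          simp only [hN, mem_filter, mem_univ, true_and] at hsN
          exact hxN ((mem_nb _ _ _ _ _).2 ⟨hfx.le, Or.inr ⟨s, hs, hsN.2⟩⟩)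
        have hall := card_le_label f m (by omega)
        have hle2 : (S ∪ N).card ≤ (univ.filter (fun w : V => (f w : ℕ) ≤ m)).card := by
          apply Finset.card_le_card
          intro w hw
          simp only [mem_filter, mem_univ, true_and]
          rcases Finset.mem_union.1 hw with hw | hw
          · exact hSm' w hw
          · simp only [hN, mem_filter, mem_univ, true_and] at hw
            omega
        rw [Finset.card_union_of_disjoint hdisj] at hle2
        omega

theorem ball {V : Type*} [Fintype V] {n : ℕ} (k : ℕ) (f : V ≃ Fin n) (G : SimpleGraph V)
    (m : ℕ) (hexp : ∀ S : Finset V, S.Nonempty → (∀ s ∈ S, (f s : ℕ) ≤ m) →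
      min (m + 1) (S.card + k) ≤ (nb f G m S).card)
    (u : V) (hu : (f u : ℕ) = m) (t : ℕ) :
    ∃ B : Finset V, u ∈ B ∧ (∀ w ∈ B, (f w : ℕ) ≤ m ∧ ∃ p : G.Walk u w, p.length ≤ t) ∧
      min (m + 1) (1 + t * k) ≤ B.card := by
  induction t with
  | zero =>
    refine ⟨{u}, by simp, ?_, by simp⟩
    intro w hw
    rw [Finset.mem_singleton] at hw
    subst hw
    exact ⟨hu.le, SimpleGraph.Walk.nil, by simp⟩
  | succ t ih =>
    obtain ⟨B, huB, hB, hc⟩ := ih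
    refine ⟨nb f G m B, ?_, ?_, ?_⟩
    · rw [mem_nb]; exact ⟨hu.le, Or.inl huB⟩
    · intro w hw
      rw [mem_nb] at hw
      refine ⟨hw.1, ?_⟩
      rcases hw.2 with h | ⟨s, hs, hsw⟩
      · obtain ⟨p, hp⟩ := (hB w h).2
        exact ⟨p, by omega⟩
      · obtain ⟨p, hp⟩ := (hB s hs).2
        exact ⟨p.concat hsw, by rw [SimpleGraph.Walk.length_concat]; omega⟩
    · have h := hexp B ⟨u, huB⟩ (fun s hs => (hB s hs).1)
      have : (t + 1) * k = t * k + k := by ring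
      omega

open Classical in
theorem far_card {V : Type*} [Fintype V] {n : ℕ} (k : ℕ) (f : V ≃ Fin n) (G : SimpleGraph V)
    (h1 : ∀ u w : V, (f u : ℕ) < k + 1 → (f w : ℕ) < k + 1 → u ≠ w → G.Adj u w)
    (h2 : ∀ u : V, k + 1 ≤ (f u : ℕ) →
      k ≤ (univ.filter (fun w : V => (f w : ℕ) < f u ∧ G.Adj w u)).card)
    (u : V) (t : ℕ) :
    (univ.filter (fun w : V => f w < f u ∧ t < G.dist u w)).card ≤ (f u : ℕ) - t * k := by
  obtain ⟨B, huB, hB, hc⟩ := ball k f G (f u) (expansion k f G h1 h2 (f u) (f u).2) u rfl t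
  have hall := card_le_label f (f u) (f u).2
  have hdisj : Disjoint B (univ.filter (fun w : V => f w < f u ∧ t < G.dist u w)) := by
    rw [Finset.disjoint_left]
    intro s hs hs'
    simp only [mem_filter, mem_univ, true_and] at hs'
    obtain ⟨p, hp⟩ := (hB s hs).2
    have := SimpleGraph.dist_le p
    omega
  have hle : (B ∪ (univ.filter (fun w : V => f w < f u ∧ t < G.dist u w))).card ≤
      (univ.filter (fun w : V => (f w : ℕ) ≤ f u)).card := by
    apply Finset.card_le_card
    intro w hw
    simp only [mem_filter, mem_univ, true_and]
    rcases Finset.mem_union.1 hw with hw | hw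
    · exact (hB w hw).1
    · simp only [mem_filter, mem_univ, true_and] at hw
      exact le_of_lt hw.1
  rw [Finset.card_union_of_disjoint hdisj, hall] at hle
  omega

theorem half_sum {V : Type*} [Fintype V] {n : ℕ} (f : V ≃ Fin n) (d : V → V → ℕ)
    (hs : ∀ u v, d u v = d v u) (h0 : ∀ u, d u u = 0) :
    ∑ u, ∑ v, d u v = 2 * ∑ u, ∑ v, if f v < f u then d u v else 0 := by
  have h : ∀ u v, d u v = (if f v < f u then d u v else 0) + (if f u < f v then d v u else 0) := by
    intro u v
    rcases lt_trichotomy (f u) (f v) with h | h | h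
    · rw [if_neg (not_lt.2 h.le), if_pos h, zero_add, hs]
    · have := f.injective h
      subst this
      simp [h0]
    · rw [if_pos h, if_neg (not_lt.2 h.le), add_zero]
  calc ∑ u, ∑ v, d u v
      = ∑ u, ∑ v, ((if f v < f u then d u v else 0) + (if f u < f v then d v u else 0)) :=
        Finset.sum_congr rfl fun u _ => Finset.sum_congr rfl fun v _ => h u v
    _ = (∑ u, ∑ v, if f v < f u then d u v else 0)
        + ∑ u, ∑ v, (if f u < f v then d v u else 0) := by
        simp only [Finset.sum_add_distrib]
    _ = _ := by
        rw [Finset.sum_comm (f := fun u v => if f u < f v then d v u else 0)]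
        ring

theorem layer {T x : ℕ} (h : x ≤ T) : x = ∑ t ∈ range T, if t < x then 1 else 0 := by
  rw [← Finset.card_filter]
  have : (range T).filter (fun t => t < x) = range x := by
    ext t
    simp
    omega
  rw [this, card_range]

open Classical in
theorem row_sum {V : Type*} [Fintype V] {n : ℕ} (f : V ≃ Fin n) (d : V → V → ℕ) (u : V)
    (T : ℕ) (hT : ∀ v, f v < f u → d u v ≤ T) :
    (∑ v, if f v < f u then d u v else 0) =
      ∑ t ∈ range T, (univ.filter (fun w : V => f w < f u ∧ t < d u w)).card := by
  simp only [Finset.card_filter]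
  rw [Finset.sum_comm]
  refine Finset.sum_congr rfl fun v _ => ?_
  by_cases h : f v < f u
  · simp only [h, if_true, true_and]
    exact layer (hT v h)
  · simp [h]

theorem tri (n a : ℕ) (ha : a ≤ n) :
    (∑ m ∈ range n, ((m - a : ℕ) : ℚ)) = ((n : ℚ) - a) * ((n : ℚ) - a - 1) / 2 := by
  induction n, ha using Nat.le_induction with
  | base =>
    rw [Finset.sum_eq_zero]
    · simp
    · intro m hm
      rw [Finset.mem_range] at hm
      rw [Nat.sub_eq_zero_of_le hm.le, Nat.cast_zero]
  | succ n hn ih =>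
    rw [Finset.sum_range_succ, ih, Nat.cast_sub hn]
    push_cast
    ring

theorem poly (n k : ℚ) (j : ℕ) :
    ∑ t ∈ range (j + 1), ((n - t * k) * (n - t * k - 1) / 2) =
      ((j : ℚ) + 1) * (2 * (j : ℚ) ^ 2 * k ^ 2 + (j : ℚ) * k * (3 + k - 6 * n)
        + 6 * n ^ 2 - 6 * n) / 12 := by
  induction j with
  | zero => simp; ring
  | succ j ih =>
    rw [Finset.sum_range_succ, ih]
    push_cast
    ring

theorem closed (n k : ℕ) (hk : 1 ≤ k) (hn : k + 1 ≤ n) :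
    ((∑ m ∈ range n, ∑ t ∈ range n, (m - t * k) : ℕ) : ℚ) =
      (((n - 1) / k : ℕ) + 1 : ℚ) *
        (2 * (((n - 1) / k : ℕ) : ℚ) ^ 2 * (k : ℚ) ^ 2
          + (((n - 1) / k : ℕ) : ℚ) * k * (3 + k - 6 * n)
          + 6 * (n : ℚ) ^ 2 - 6 * n) / 12 := by
  rw [← poly, Finset.sum_comm]
  push_cast
  have hj : (n - 1) / k + 1 ≤ n := by
    have := Nat.div_le_self (n - 1) k
    omega
  rw [← Finset.sum_subset (Finset.range_subset_range.2 hj)]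
  · refine Finset.sum_congr rfl fun t ht => ?_
    rw [Finset.mem_range] at ht
    have h3 : t * k ≤ n - 1 := (Nat.le_div_iff_mul_le (by omega)).1 (by omega)
    have := tri n (t * k) (by omega)
    push_cast at this
    exact this
  · intro t _ ht
    rw [Finset.mem_range, not_lt] at ht
    refine Finset.sum_eq_zero fun m hm => ?_
    rw [Finset.mem_range] at hm
    have h3 : n - 1 < t * k := (Nat.div_lt_iff_lt_mul (by omega)).1 (by omega)
    rw [Nat.sub_eq_zero_of_le (by omega), Nat.cast_zero]

theorem label_sum {V : Type*} [Fintype V] {n : ℕ} (f : V ≃ Fin n) (g : ℕ → ℕ) :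
    ∑ u, g (f u) = ∑ m ∈ range n, g m := by
  rw [Equiv.sum_comp f (fun i : Fin n => g i), Fin.sum_univ_eq_sum_range]

theorem wiener_eq {V : Type*} [Fintype V] {n : ℕ} (f : V ≃ Fin n) (G : SimpleGraph V) :
    wienerIndex G = ((∑ u, ∑ v, if f v < f u then G.dist u v else 0 : ℕ) : ℚ) := by
  have h := half_sum f (fun u v => G.dist u v) (fun u v => SimpleGraph.dist_comm) (by simp)
  unfold wienerIndex
  have h' : (∑ u : V, ∑ v : V, (G.dist u v : ℚ)) = ((∑ u, ∑ v, G.dist u v : ℕ) : ℚ) := by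
    push_cast; rfl
  rw [h', h, Nat.cast_mul]
  simp

theorem upper {V : Type*} [Fintype V] {n : ℕ} (k : ℕ) (hk : 1 ≤ k) (f : V ≃ Fin n)
    (G : SimpleGraph V)
    (hfar : ∀ u : V, ∀ t : ℕ, ∀ S : Finset V, (∀ w, w ∈ S ↔ f w < f u ∧ t < G.dist u w) →
      S.card ≤ (f u : ℕ) - t * k) :
    (∑ u, ∑ v, if f v < f u then G.dist u v else 0) ≤
      ∑ m ∈ range n, ∑ t ∈ range n, (m - t * k) := by
  classical
  rw [← label_sum f (fun m => ∑ t ∈ range n, (m - t * k))]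
  refine Finset.sum_le_sum fun u _ => ?_
  rw [row_sum f (fun u v => G.dist u v) u n]
  · exact Finset.sum_le_sum fun t _ => hfar u t _ (by simp)
  · intro v hv
    by_contra hlt
    have h := hfar u n (univ.filter (fun w : V => f w < f u ∧ n < G.dist u w)) (by simp)
    have hz : (f u : ℕ) - n * k = 0 := by
      have : n ≤ n * k := Nat.le_mul_of_pos_right n hk
      have := (f u).2
      omega
    rw [hz, Nat.le_zero, Finset.card_eq_zero] at h
    have : v ∈ (∅ : Finset V) := by
      rw [← h]
      simp only [mem_filter, mem_univ, true_and]
      exact ⟨hv, not_le.1 hlt⟩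
    simp at this

theorem pp_adj {n k : ℕ} (i j : Fin n) : (pathPower n k).Adj i j ↔
    i ≠ j ∧ (i : ℕ) ≤ (j : ℕ) + k ∧ (j : ℕ) ≤ (i : ℕ) + k := by
  simp only [pathPower, SimpleGraph.fromRel_adj]
  tauto

theorem pp_walk {n k : ℕ} {i j : Fin n} (p : (pathPower n k).Walk i j) :
    (i : ℕ) ≤ j + p.length * k := by
  induction p with
  | nil => simp
  | cons h p ih =>
    rw [pp_adj] at h
    rw [SimpleGraph.Walk.length_cons, add_mul]
    omega

theorem pp_exists {n k : ℕ} (t : ℕ) : ∀ (i j : Fin n), (j : ℕ) ≤ i → (i : ℕ) ≤ j + t * k →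
    ∃ p : (pathPower n k).Walk i j, p.length ≤ t := by
  induction t with
  | zero =>
    intro i j h1 h2
    have : i = j := Fin.ext (by omega)
    subst this
    exact ⟨SimpleGraph.Walk.nil, by simp⟩
  | succ t ih =>
    intro i j h1 h2
    rw [add_mul, one_mul] at h2
    by_cases hij : i = j
    · subst hij
      exact ⟨SimpleGraph.Walk.nil, by simp⟩
    have hij' : (i : ℕ) ≠ j := fun h => hij (Fin.ext h)
    by_cases hk : (i : ℕ) ≤ j + k
    · have ha : (pathPower n k).Adj i j := by
        rw [pp_adj]
        exact ⟨hij, by omega, by omega⟩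
      exact ⟨SimpleGraph.Walk.cons ha SimpleGraph.Walk.nil, by simp⟩
    · by_cases hk0 : k = 0
      · subst hk0
        simp at h2
        omega
      obtain ⟨p, hp⟩ := ih ⟨i - k, by omega⟩ j (by simp; omega) (by simp; omega)
      have ha : (pathPower n k).Adj i ⟨i - k, by omega⟩ := by
        rw [pp_adj]
        refine ⟨fun h => ?_, by simp; omega, by simp; omega⟩
        have := congrArg Fin.val h
        simp at this
        omega
      exact ⟨SimpleGraph.Walk.cons ha p, by simp; omega⟩

theorem pp_dist {n k : ℕ} (hk : 1 ≤ k) (i j : Fin n) (hji : j < i) (t : ℕ) :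
    t < (pathPower n k).dist i j ↔ (j : ℕ) < i - t * k := by
  have hji' : (j : ℕ) < i := hji
  constructor
  · intro h
    by_contra hc
    obtain ⟨p, hp⟩ := pp_exists (k := k) t i j hji'.le (by omega)
    have := SimpleGraph.dist_le p
    omega
  · intro h
    by_contra hc
    obtain ⟨q, _⟩ := pp_exists (k := k) i i j hji'.le (by
      have : (i : ℕ) ≤ i * k := Nat.le_mul_of_pos_right _ hk
      omega)
    obtain ⟨p, hp⟩ := SimpleGraph.Reachable.exists_walk_length_eq_dist ⟨q⟩
    have h3 := pp_walk p
    have h4 : p.length * k ≤ t * k := Nat.mul_le_mul_right k (by omega)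
    omega

theorem pp_sum {n k : ℕ} (hk : 1 ≤ k) (e : Fin n ≃ Fin n) (he : ∀ i, e i = i) :
    (∑ u : Fin n, ∑ v : Fin n, if e v < e u then (pathPower n k).dist u v else 0) =
      ∑ m ∈ range n, ∑ t ∈ range n, (m - t * k) := by
  classical
  rw [← label_sum e (fun m => ∑ t ∈ range n, (m - t * k))]
  refine Finset.sum_congr rfl fun u _ => ?_
  have hd : ∀ w : Fin n, ∀ t : ℕ,
      (e w < e u ∧ t < (pathPower n k).dist u w) ↔ (e w : ℕ) < (e u : ℕ) - t * k := by
    intro w t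
    rw [he, he]
    constructor
    · rintro ⟨hw, hw2⟩
      exact (pp_dist hk u w hw t).1 hw2
    · intro hw
      have hwu : w < u := by
        rw [Fin.lt_def]
        exact lt_of_lt_of_le hw (Nat.sub_le _ _)
      exact ⟨hwu, (pp_dist hk u w hwu t).2 hw⟩
  rw [row_sum e (fun u v => (pathPower n k).dist u v) u n]
  · refine Finset.sum_congr rfl fun t _ => ?_
    by_cases h0 : (e u : ℕ) - t * k = 0
    · rw [h0, Finset.card_eq_zero, Finset.filter_eq_empty_iff]
      intro w _ hw
      rw [hd w t, h0] at hw
      exact Nat.not_lt_zero _ hw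
    · obtain ⟨c, hcc⟩ := Nat.exists_eq_succ_of_ne_zero h0
      have hlt := (e u).2
      rw [hcc, Nat.succ_eq_add_one, ← card_le_label e c (by omega)]
      congr 1
      ext w
      simp only [mem_filter, mem_univ, true_and]
      rw [hd w t, hcc, Nat.succ_eq_add_one, Nat.lt_succ_iff]
  · intro v hv
    by_contra hlt
    have h1 := (hd v n).1 ⟨hv, not_le.1 hlt⟩
    have h2 : n ≤ n * k := Nat.le_mul_of_pos_right n hk
    have h3 := (e u).2
    omega

end WienerAux

/-- A linear `k`-tree (`k ≥ 1`) on `n ≥ k + 1` vertices has Wiener index at most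
`(j+1)(2j²k² + jk(3 + k - 6n) + 6n² - 6n)/12`, where `j = ⌊(n-1)/k⌋`; moreover, this
bound is attained by the linear `k`-tree in which each vertex is adjacent to exactly
the `k` immediately preceding vertices in the labeling. -/
theorem wienerIndex_linearKTree_upper_bound {V : Type*} [Fintype V]
    (k : ℕ) (hk : 1 ≤ k) (G : SimpleGraph V) (hG : IsLinearKTree k G)
    (hn : k + 1 ≤ Fintype.card V) :
    (wienerIndex G ≤
      (((Fintype.card V - 1) / k : ℕ) + 1 : ℚ) *
        (2 * (((Fintype.card V - 1) / k : ℕ) : ℚ) ^ 2 * (k : ℚ) ^ 2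
          + (((Fintype.card V - 1) / k : ℕ) : ℚ) * k * (3 + k - 6 * Fintype.card V)
          + 6 * (Fintype.card V : ℚ) ^ 2 - 6 * Fintype.card V) / 12) ∧
    wienerIndex (pathPower (Fintype.card V) k) =
      (((Fintype.card V - 1) / k : ℕ) + 1 : ℚ) *
        (2 * (((Fintype.card V - 1) / k : ℕ) : ℚ) ^ 2 * (k : ℚ) ^ 2
          + (((Fintype.card V - 1) / k : ℕ) : ℚ) * k * (3 + k - 6 * Fintype.card V)
          + 6 * (Fintype.card V : ℚ) ^ 2 - 6 * Fintype.card V) / 12 := by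
  classical
  constructor
  · obtain ⟨f, h1, h2⟩ := hG
    rw [← WienerAux.closed (Fintype.card V) k hk hn, WienerAux.wiener_eq f G]
    have h2' : ∀ u : V, k + 1 ≤ (f u : ℕ) →
        k ≤ (univ.filter (fun w : V => (f w : ℕ) < f u ∧ G.Adj w u)).card := by
      intro u hu
      have h := (h2 u hu).1
      rw [Set.ncard_eq_toFinset_card'] at h
      refine h.symm.le.trans (Finset.card_le_card ?_)
      intro w hw
      simpa using hw
    refine Nat.cast_le.2 (WienerAux.upper k hk f G ?_)
    intro u t S hS
    refine le_trans (Finset.card_le_card ?_) (WienerAux.far_card k f G h1 (by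
      intro u hu
      refine (h2' u hu).trans (le_of_eq ?_)
      congr) u t)
    intro w hw
    simpa using (hS w).1 hw
  · rw [← WienerAux.closed (Fintype.card V) k hk hn,
      WienerAux.wiener_eq (Equiv.refl (Fin (Fintype.card V)))]
    exact congrArg _ (WienerAux.pp_sum hk _ (fun _ => rfl))
end
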